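/- arXiv:2511.13537 — 3 statements merged into one kernel-verified Lean document; each statement's English description precedes it below -/
import Mathlib

section
/- Throughout, $\dim$ of a subset of $\mathbb{R}^n$ is the dimension of its affine span, with $\dim\emptyset=-1$. Let $n\ge 1$ and let $\ell_1,\dots,\ell_d\in\mathbb{R}[X_0,\dots,X_n]$ be pairwise non-proportional nonzero homogeneous polynomials of degree $1$ such that $P=\{y\in\mathbb{R}^n:\ell_i(1,y)\ge 0\text{ for all }i\}$ is compact, the affine span of $P$ is $\mathbb{R}^n$, and for each $i$ the facet $F_i=\{y\in P:\ell_i(1,y)=0\}$ satisfies $\dim F_i=n-1$. For $i\ne j$ call $F_i$ and $F_j$ incident if $\dim(F_i\cap F_j)=n-2$ (so the two endpoints of a segment, $n=1$, are incident). For a nonzero $v\in\mathbb{C}^{n+1}$ let $I_v\subseteq\mathbb{C}[X_0,\dots,X_n]$ be the ideal generated by the homogeneous polynomials of degree $1$ vanishing at $v$, let $\mathcal F_v=\{i:\ell_i(v)=0\}$, let $r_v$ be the dimension of the real linear span of $\{\ell_i:i\in\mathcal F_v\}$, and let $P_v=\{y\in P:\ell_i(1,y)=0\text{ for all }i\in\mathcal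 F_v\}$. Set $$\operatorname{ord}_P(L_v)=\begin{cases}|\mathcal F_v|-r_v&\text{if }\dim P_v=n-r_v,\\ |\mathcal F_v|-r_v+1&\text{otherwise.}\end{cases}$$ Fix $i_0\in\{1,\dots,d\}$. For a nonzero $v\in\mathbb{C}^{n+1}$ with $\ell_{i_0}(v)=0$ let $\mathcal F'_v=\{j\ne i_0: F_j\text{ is incident to }F_{i_0}\text{ and }\ell_j(v)=0\}$, let $r'_v+1$ be the dimension of the real linear span of $\{\ell_{i_0}\}\cup\{\ell_j:j\in\mathcal F'_v\}$, and let $P'_v=\{y\in F_{i_0}:\ell_j(1,y)=0\text{ for all }j\in\mathcal F'_v\}$. Set $$\operatorname{ord}_{P'}(L'_v)=\begin{cases}|\mathcal F'_v|-r'_v&\text{if }\dim P'_v=(n-1)-r'_v,\\ |\mathcal F'_v|-r'_v+1&\text{otherwise;}\end{cases}$$ this is the order defined above, taken for the facet $P'=F_{i_0}$ as an $(n-1)$-dimensional polytope in the hyperplane $\{\ell_{i_0}=0\}$. Let $f\in\mathbb{C}[X_0,\dots,X_n]$ be a nonzero homogeneous polynomial of degree $d-n-1$ such that $f\in I_v^{\operatorname{ord}_P(L_v)}$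 for every nonzero $v\in\mathbb{R}^{n+1}$. Let $N$ be the set of indices $j\ne i_0$ such that $F_j$ is not incident to $F_{i_0}$, and set $d'=d-1-|N|$. Then there exists a homogeneous polynomial $g\in\mathbb{C}[X_0,\dots,X_n]$ of degree $d'-n$, not divisible by $\ell_{i_0}$, such that $\ell_{i_0}$ divides $f-g\cdot\prod_{j\in N}\ell_j$, and such that for every nonzero $v\in\mathbb{C}^{n+1}$ with $\ell_{i_0}(v)=0$ the restriction of $g$ to the hyperplane $\{\ell_{i_0}=0\}$ vanishes at $v$ to order at least $\operatorname{ord}_{P'}(L'_v)$, i.e. the class of $g$ in $\mathbb{C}[X_0,\dots,X_n]/(\ell_{i_0})$ lies in the $\operatorname{ord}_{P'}(L'_v)$-th power of the image of $I_v$. -/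
noncomputable section

namespace AdjointRestriction

open MvPolynomial

/-- The embedding `y ↦ (1, y₁, …, yₙ)` of affine space into homogeneous coordinates. -/
def lift1 {n : ℕ} (y : Fin n → ℝ) : Fin (n + 1) → ℝ := Fin.cons 1 y

/-- The dimension of the affine span of a set, with `dim ∅ = -1`. -/
def affDim {n : ℕ} (s : Set (Fin n → ℝ)) : ℤ :=
  open Classical in
  if s.Nonempty then (Module.finrank ℝ (affineSpan ℝ s).direction : ℤ) else -1

/-- The polytope `P = {y ∈ ℝⁿ | ℓᵢ(1, y) ≥ 0 for all i}`. -/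
def polytopeOf {n d : ℕ} (ℓ : Fin d → MvPolynomial (Fin (n + 1)) ℝ) : Set (Fin n → ℝ) :=
  {y | ∀ i, 0 ≤ eval (lift1 y) (ℓ i)}

/-- The facet `Fᵢ = {y ∈ P | ℓᵢ(1, y) = 0}`. -/
def facetOf {n d : ℕ} (ℓ : Fin d → MvPolynomial (Fin (n + 1)) ℝ) (i : Fin d) :
    Set (Fin n → ℝ) :=
  {y ∈ polytopeOf ℓ | eval (lift1 y) (ℓ i) = 0}

/-- `ℓ₁, …, ℓ_d` are the homogenized facet equations of a full-dimensional polytope in `ℝⁿ`. -/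
structure IsPolytopeSetup {n d : ℕ} (ℓ : Fin d → MvPolynomial (Fin (n + 1)) ℝ) : Prop where
  one_le : 1 ≤ n
  homogeneous : ∀ i, (ℓ i).IsHomogeneous 1
  ne_zero : ∀ i, ℓ i ≠ 0
  not_proportional : ∀ i j, i ≠ j → ∀ c : ℝ, c • ℓ i ≠ ℓ j
  compact : IsCompact (polytopeOf ℓ)
  full : affineSpan ℝ (polytopeOf ℓ) = ⊤
  facet_dim : ∀ i, affDim (facetOf ℓ i) = (n : ℤ) - 1

/-- The flat `F_v = {i | ℓᵢ(v) = 0}` of all facet hyperplanes through the point `v` of complex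
projective space. -/
def flatOf {n d : ℕ} (ℓ : Fin d → MvPolynomial (Fin (n + 1)) ℝ) (v : Fin (n + 1) → ℂ) :
    Finset (Fin d) :=
  open Classical in
  Finset.univ.filter fun i => aeval v (ℓ i) = 0

/-- The rank of a set `S` of facet hyperplanes: the dimension of the linear span of
`{ℓᵢ : i ∈ S}`, which is the codimension of the intersection of these hyperplanes. -/
def rkOf {n d : ℕ} (ℓ : Fin d → MvPolynomial (Fin (n + 1)) ℝ) (S : Finset (Fin d)) : ℕ :=
  Module.finrank ℝ (Submodule.span ℝ (ℓ '' (S : Set (Fin d))))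

/-- The intersection of `P` with the facet hyperplanes in `S`. -/
def faceOf {n d : ℕ} (ℓ : Fin d → MvPolynomial (Fin (n + 1)) ℝ) (S : Finset (Fin d)) :
    Set (Fin n → ℝ) :=
  {y ∈ polytopeOf ℓ | ∀ i ∈ S, eval (lift1 y) (ℓ i) = 0}

/-- The order `ord_P(L_v)`: the nullity `|F_v| - r_v`, plus one unless `L_v ∩ P` has the
dimension `n - r_v` of `L_v`. -/
def ordOf {n d : ℕ} (ℓ : Fin d → MvPolynomial (Fin (n + 1)) ℝ) (v : Fin (n + 1) → ℂ) : ℕ :=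
  open Classical in
  if affDim (faceOf ℓ (flatOf ℓ v)) = (n : ℤ) - rkOf ℓ (flatOf ℓ v)
  then (flatOf ℓ v).card - rkOf ℓ (flatOf ℓ v)
  else (flatOf ℓ v).card - rkOf ℓ (flatOf ℓ v) + 1

/-- Incidence of the facets `Fᵢ` and `Fⱼ`: they are distinct and meet in a face of codimension
two. As `dim ∅ = -1`, the two endpoints of a segment (`n = 1`) are incident. -/
def Incident {n d : ℕ} (ℓ : Fin d → MvPolynomial (Fin (n + 1)) ℝ) (i j : Fin d) : Prop :=
  i ≠ j ∧ affDim (facetOf ℓ i ∩ facetOf ℓ j) = (n : ℤ) - 2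

/-- The indices different from `i₀` of the facets that are not incident to `F_{i₀}`. -/
def nonIncident {n d : ℕ} (ℓ : Fin d → MvPolynomial (Fin (n + 1)) ℝ) (i₀ : Fin d) :
    Finset (Fin d) :=
  open Classical in
  Finset.univ.filter fun j => j ≠ i₀ ∧ ¬ Incident ℓ j i₀

/-- For a point `v` of the hyperplane `H = {ℓ_{i₀} = 0}`, the flat `F'_v` of the facet polytope
`P' = P ∩ H` at `v`. The facet hyperplanes of `P'` in `H` are the `H ∩ {ℓⱼ = 0}` with `Fⱼ`
incident to `F_{i₀}`. -/
def facetFlatOf {n d : ℕ} (ℓ : Fin d → MvPolynomial (Fin (n + 1)) ℝ) (i₀ : Fin d)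
    (v : Fin (n + 1) → ℂ) : Finset (Fin d) :=
  open Classical in
  Finset.univ.filter fun j => Incident ℓ j i₀ ∧ aeval v (ℓ j) = 0

/-- The rank of `F'_v` in the arrangement of `P'`, that is the codimension in `H` of
`L'_v = H ∩ ⋂_{j ∈ F'_v} {ℓⱼ = 0}`, which is one less than its codimension in the ambient
projective space. -/
def facetRkOf {n d : ℕ} (ℓ : Fin d → MvPolynomial (Fin (n + 1)) ℝ) (i₀ : Fin d)
    (v : Fin (n + 1) → ℂ) : ℕ :=
  rkOf ℓ (insert i₀ (facetFlatOf ℓ i₀ v)) - 1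

/-- The order `ord_{P'}(L'_v)` with respect to the polytope `P' = P ∩ H` of dimension `n - 1`
in `H = {ℓ_{i₀} = 0}`: the nullity `|F'_v| - r'_v`, plus one unless `L'_v ∩ P'` has the
dimension `(n - 1) - r'_v` of `L'_v`. -/
def facetOrdOf {n d : ℕ} (ℓ : Fin d → MvPolynomial (Fin (n + 1)) ℝ) (i₀ : Fin d)
    (v : Fin (n + 1) → ℂ) : ℕ :=
  open Classical in
  if affDim (faceOf ℓ (insert i₀ (facetFlatOf ℓ i₀ v))) = ((n : ℤ) - 1) - facetRkOf ℓ i₀ v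
  then (facetFlatOf ℓ i₀ v).card - facetRkOf ℓ i₀ v
  else (facetFlatOf ℓ i₀ v).card - facetRkOf ℓ i₀ v + 1

/-- The ideal `I_v ⊆ ℂ[X₀, …, Xₙ]` generated by all homogeneous polynomials of degree one
vanishing at `v`. -/
def pointIdeal {n : ℕ} (v : Fin (n + 1) → ℂ) : Ideal (MvPolynomial (Fin (n + 1)) ℂ) :=
  Ideal.span {p | p.IsHomogeneous 1 ∧ eval v p = 0}

/-- A real polynomial viewed as a complex one. -/
def toC {n : ℕ} (p : MvPolynomial (Fin (n + 1)) ℝ) : MvPolynomial (Fin (n + 1)) ℂ :=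
  map (algebraMap ℝ ℂ) p

/-- The restriction of `g` to the hyperplane `{ℓ = 0}` vanishes at the point `v` of this
hyperplane to order at least `k`: the class of `g` in the homogeneous coordinate ring
`ℂ[X₀, …, Xₙ] / (ℓ)` lies in the `k`-th power of the ideal of `v`. -/
def RestrictionVanishes {n : ℕ} (ℓ g : MvPolynomial (Fin (n + 1)) ℂ) (v : Fin (n + 1) → ℂ)
    (k : ℕ) : Prop :=
  Ideal.Quotient.mk (Ideal.span {ℓ}) g ∈
    ((pointIdeal v).map (Ideal.Quotient.mk (Ideal.span {ℓ}))) ^ k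

end AdjointRestriction

end

noncomputable section

namespace AdjointRestriction

open MvPolynomial Module

/-- A real vector viewed as a complex one. -/
def cvec {m : ℕ} (x : Fin m → ℝ) : Fin m → ℂ := fun i => (x i : ℂ)

@[simp] lemma cvec_apply {m : ℕ} (x : Fin m → ℝ) (i : Fin m) : cvec x i = (x i : ℂ) := rfl

/-- A real linear form viewed as a complex homogeneous polynomial of degree one. -/
def linC {m : ℕ} (φ : Dual ℝ (Fin m → ℝ)) : MvPolynomial (Fin m) ℂ :=
  ∑ i, C ((φ (Pi.single i 1) : ℝ) : ℂ) * X i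

lemma dual_apply_eq_sum {m : ℕ} (φ : Dual ℝ (Fin m → ℝ)) (x : Fin m → ℝ) :
    φ x = ∑ i, φ (Pi.single i 1) * x i := by
  conv_lhs => rw [pi_eq_sum_univ' x, map_sum]
  refine Finset.sum_congr rfl fun i _ => ?_
  rw [map_smul, smul_eq_mul, mul_comm]

lemma eval_linC {m : ℕ} (φ : Dual ℝ (Fin m → ℝ)) (x : Fin m → ℂ) :
    eval x (linC φ) = ∑ i, ((φ (Pi.single i 1) : ℝ) : ℂ) * x i := by
  simp [linC]

@[simp] lemma eval_cvec_linC {m : ℕ} (φ : Dual ℝ (Fin m → ℝ)) (x : Fin m → ℝ) :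
    eval (cvec x) (linC φ) = ((φ x : ℝ) : ℂ) := by
  rw [eval_linC, dual_apply_eq_sum φ x]
  push_cast
  rfl

lemma linC_isHomogeneous {m : ℕ} (φ : Dual ℝ (Fin m → ℝ)) : (linC φ).IsHomogeneous 1 := by
  refine IsHomogeneous.sum _ _ _ fun i _ => ?_
  simpa using (isHomogeneous_C (Fin m) ((φ (Pi.single i 1) : ℝ) : ℂ)).mul (isHomogeneous_X ℂ i)

/-- A complex polynomial vanishing at all real points is zero. -/
lemma eq_zero_of_eval_cvec {m : ℕ} {p : MvPolynomial (Fin m) ℂ}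
    (h : ∀ x : Fin m → ℝ, eval (cvec x) p = 0) : p = 0 := by
  refine funext_set (fun _ => Set.range ((↑) : ℝ → ℂ))
    (fun _ => Set.infinite_range_of_injective Complex.ofReal_injective) fun x hx => ?_
  choose y hy using fun i => hx i (Set.mem_univ i)
  have : x = cvec y := by ext i; simp [hy]
  rw [this, h, map_zero]

/-- Substitution of a real linear map into a complex polynomial. -/
def subst {k m : ℕ} (e : (Fin k → ℝ) →ₗ[ℝ] (Fin m → ℝ)) :
    MvPolynomial (Fin m) ℂ →ₐ[ℂ] MvPolynomial (Fin k) ℂ :=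
  aeval fun i => linC (LinearMap.proj i ∘ₗ e)

@[simp] lemma subst_X {k m : ℕ} (e : (Fin k → ℝ) →ₗ[ℝ] (Fin m → ℝ)) (i : Fin m) :
    subst e (X i) = linC (LinearMap.proj i ∘ₗ e) := by simp [subst]

lemma eval_subst {k m : ℕ} (e : (Fin k → ℝ) →ₗ[ℝ] (Fin m → ℝ)) (f : MvPolynomial (Fin m) ℂ)
    (x : Fin k → ℝ) : eval (cvec x) (subst e f) = eval (cvec (e x)) f := by
  have : (aeval (cvec x) : MvPolynomial (Fin k) ℂ →ₐ[ℂ] ℂ).comp (subst e) = aeval (cvec (e x)) := by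
    refine algHom_ext fun i => ?_
    rw [AlgHom.comp_apply, subst_X]
    simp only [aeval_eq_eval, aeval_X, eval_cvec_linC]
    rfl
  simpa [aeval_eq_eval] using congrArg (fun F => F f) this

lemma eq_of_eval_cvec {m : ℕ} {p q : MvPolynomial (Fin m) ℂ}
    (h : ∀ x : Fin m → ℝ, eval (cvec x) p = eval (cvec x) q) : p = q :=
  sub_eq_zero.1 <| eq_zero_of_eval_cvec fun x => by rw [map_sub, h, sub_self]

lemma subst_linC {k m : ℕ} (e : (Fin k → ℝ) →ₗ[ℝ] (Fin m → ℝ)) (φ : Dual ℝ (Fin m → ℝ)) :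
    subst e (linC φ) = linC (φ ∘ₗ e) :=
  eq_of_eval_cvec fun x => by simp [eval_subst]

lemma subst_subst {j k m : ℕ} (e' : (Fin j → ℝ) →ₗ[ℝ] (Fin k → ℝ))
    (e : (Fin k → ℝ) →ₗ[ℝ] (Fin m → ℝ)) (f : MvPolynomial (Fin m) ℂ) :
    subst e' (subst e f) = subst (e ∘ₗ e') f :=
  eq_of_eval_cvec fun x => by simp [eval_subst]

lemma subst_id {m : ℕ} (f : MvPolynomial (Fin m) ℂ) : subst LinearMap.id f = f :=
  eq_of_eval_cvec fun x => by simp [eval_subst]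

lemma isHomogeneous_subst {k m e' : ℕ} (e : (Fin k → ℝ) →ₗ[ℝ] (Fin m → ℝ))
    {f : MvPolynomial (Fin m) ℂ} (hf : f.IsHomogeneous e') : (subst e f).IsHomogeneous e' := by
  have := hf.aeval (n := 1) (fun i => linC (LinearMap.proj i ∘ₗ e)) fun i => linC_isHomogeneous _
  rwa [one_mul] at this

/-- If each variable is congruent modulo `I` to the form substituted for it, then so is every
polynomial to its substitution. -/
lemma sub_subst_mem {m : ℕ} (I : Ideal (MvPolynomial (Fin m) ℂ))
    (p : (Fin m → ℝ) →ₗ[ℝ] (Fin m → ℝ))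
    (h : ∀ i, X i - subst p (X i) ∈ I) (f : MvPolynomial (Fin m) ℂ) : f - subst p f ∈ I := by
  have : (Ideal.Quotient.mkₐ ℂ I) = (Ideal.Quotient.mkₐ ℂ I).comp (subst p) := by
    refine algHom_ext fun i => ?_
    exact Ideal.Quotient.eq.2 (h i)
  exact Ideal.Quotient.eq.1 (congrArg (fun F => F f) this)

/-- The projection along `h` onto the kernel of `φ`, if `φ h = 1`. -/
def projKer {m : ℕ} (φ : Dual ℝ (Fin m → ℝ)) (h : Fin m → ℝ) :
    (Fin m → ℝ) →ₗ[ℝ] (Fin m → ℝ) := LinearMap.id - φ.smulRight h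

lemma projKer_apply {m : ℕ} (φ : Dual ℝ (Fin m → ℝ)) (h x : Fin m → ℝ) :
    projKer φ h x = x - φ x • h := by simp [projKer]

lemma linC_dvd_sub_subst_projKer {m : ℕ} (φ : Dual ℝ (Fin m → ℝ)) (h : Fin m → ℝ)
    (f : MvPolynomial (Fin m) ℂ) : linC φ ∣ f - subst (projKer φ h) f := by
  rw [← Ideal.mem_span_singleton]
  refine sub_subst_mem _ _ (fun i => Ideal.mem_span_singleton.2 ⟨C (h i : ℂ), ?_⟩) f
  refine eq_of_eval_cvec fun x => ?_
  simp [projKer_apply]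

lemma exists_apply_eq_one {m : ℕ} {φ : Dual ℝ (Fin m → ℝ)} (h : φ ≠ 0) : ∃ x, φ x = 1 := by
  obtain ⟨x, hx⟩ : ∃ x, φ x ≠ 0 := by
    by_contra! H
    exact h (LinearMap.ext H)
  exact ⟨(φ x)⁻¹ • x, by simp [hx]⟩

lemma linC_dvd_of_vanishing {m : ℕ} {φ : Dual ℝ (Fin m → ℝ)} (hφ : φ ≠ 0)
    {f : MvPolynomial (Fin m) ℂ} (hf : ∀ x, φ x = 0 → eval (cvec x) f = 0) : linC φ ∣ f := by
  obtain ⟨h, hh⟩ := exists_apply_eq_one hφ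
  have h0 : subst (projKer φ h) f = 0 := eq_zero_of_eval_cvec fun x => by
    rw [eval_subst]
    exact hf _ (by simp [projKer_apply, hh])
  simpa [h0] using linC_dvd_sub_subst_projKer φ h f

/-- A cofactor of a linear form in a nonzero homogeneous polynomial is homogeneous. -/
lemma isHomogeneous_of_linC_mul {m e : ℕ} {φ : Dual ℝ (Fin m → ℝ)}
    {g : MvPolynomial (Fin m) ℂ} (h0 : linC φ * g ≠ 0) (h : (linC φ * g).IsHomogeneous e) :
    ∃ k, e = k + 1 ∧ g.IsHomogeneous k := by
  classical
  let _ : GradedAlgebra (homogeneousSubmodule (Fin m) ℂ) := gradedAlgebra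
  have hφ : linC φ ∈ homogeneousSubmodule (Fin m) ℂ 1 := linC_isHomogeneous φ
  have hd : ∀ j, j ≠ e → (DirectSum.decompose (homogeneousSubmodule (Fin m) ℂ) (linC φ * g) j :
      MvPolynomial (Fin m) ℂ) = 0 := fun j hj =>
    DirectSum.decompose_of_mem_ne _ h (Ne.symm hj)
  have hj : ∀ j, j + 1 ≠ e → (DirectSum.decompose (homogeneousSubmodule (Fin m) ℂ) g j :
      MvPolynomial (Fin m) ℂ) = 0 := by
    intro j hj
    have := hd _ hj
    rw [DirectSum.coe_decompose_mul_of_left_mem_of_le _ hφ (by omega)] at this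
    simpa [left_ne_zero_of_mul h0] using this
  have hsum := DirectSum.sum_support_decompose (homogeneousSubmodule (Fin m) ℂ) g
  obtain _ | k := e
  · exfalso
    refine right_ne_zero_of_mul h0 ?_
    rw [← hsum]
    exact Finset.sum_eq_zero fun j _ => hj j (by omega)
  · refine ⟨k, rfl, ?_⟩
    rw [← hsum]
    refine IsHomogeneous.sum _ _ _ fun j _ => ?_
    by_cases hk : j = k
    · subst hk
      exact (DirectSum.decompose (homogeneousSubmodule (Fin m) ℂ) g j).2
    · rw [hj j (by omega)]
      exact isHomogeneous_zero _ _ _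

/-- The restriction of `f` to the parametrized line `v + T w`. -/
def line {m : ℕ} (v w : Fin m → ℂ) : MvPolynomial (Fin m) ℂ →ₐ[ℂ] Polynomial ℂ :=
  aeval fun i => Polynomial.C (v i) + Polynomial.X * Polynomial.C (w i)

lemma eval_line {m : ℕ} (v w : Fin m → ℂ) (f : MvPolynomial (Fin m) ℂ) (t : ℂ) :
    (line v w f).eval t = eval (v + t • w) f := by
  have : (Polynomial.aeval t : Polynomial ℂ →ₐ[ℂ] ℂ).comp (line v w) = aeval (v + t • w) := by
    refine algHom_ext fun i => ?_
    simp [line, mul_comm t]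
  simpa [aeval_eq_eval, Polynomial.coe_aeval_eq_eval] using congrArg (fun F => F f) this

lemma line_linC {m : ℕ} (v w : Fin m → ℝ) (φ : Dual ℝ (Fin m → ℝ)) :
    line (cvec v) (cvec w) (linC φ) =
      Polynomial.C ((φ v : ℝ) : ℂ) + Polynomial.X * Polynomial.C ((φ w : ℝ) : ℂ) := by
  refine Polynomial.funext fun t => ?_
  have h : ∀ x : Fin m → ℝ, ∑ i, ((φ (Pi.single i 1) : ℝ) : ℂ) * (x i : ℂ) = ((φ x : ℝ) : ℂ) :=
    fun x => by rw [dual_apply_eq_sum φ x]; push_cast; rfl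
  rw [eval_line, eval_linC]
  simp only [Pi.add_apply, Pi.smul_apply, cvec_apply, smul_eq_mul, mul_add, Finset.sum_add_distrib,
    mul_left_comm _ t, ← Finset.mul_sum, h, Polynomial.eval_add, Polynomial.eval_mul,
    Polynomial.eval_C, Polynomial.eval_X]

/-- Vanishing to order at least `k` along a pencil of lines is a closed condition. -/
lemma X_pow_dvd_line_of_infinite {m k : ℕ} {v u w z : Fin m → ℂ} {f : MvPolynomial (Fin m) ℂ}
    {s : Set ℂ} (hs : s.Infinite)
    (h : ∀ a ∈ s, Polynomial.X ^ k ∣ line (v + a • u) (w + a • z) f) (a : ℂ) :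
    Polynomial.X ^ k ∣ line (v + a • u) (w + a • z) f := by
  let F : MvPolynomial (Fin m) ℂ →ₐ[ℂ] Polynomial (Polynomial ℂ) := aeval fun i =>
    Polynomial.C (Polynomial.C (v i) + Polynomial.X * Polynomial.C (u i)) +
      Polynomial.X * Polynomial.C (Polynomial.C (w i) + Polynomial.X * Polynomial.C (z i))
  have hF : ∀ b : ℂ, line (v + b • u) (w + b • z) f =
      (F f).map (Polynomial.evalRingHom b) := by
    intro b
    have : line (v + b • u) (w + b • z) =
        (Polynomial.mapAlgHom (Polynomial.aeval b : Polynomial ℂ →ₐ[ℂ] ℂ)).comp F := by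
      refine algHom_ext fun i => ?_
      simp [line, F, mul_comm b]
    rw [this]
    rfl
  rw [Polynomial.X_pow_dvd_iff]
  intro j hj
  have h0 : (F f).coeff j = 0 := by
    refine Polynomial.eq_zero_of_infinite_isRoot _ (hs.mono fun b hb => ?_)
    have := (Polynomial.X_pow_dvd_iff.1 (h b hb)) j hj
    rwa [hF, Polynomial.coeff_map] at this
  rw [hF, Polynomial.coeff_map, h0, map_zero]

lemma line_subst {k m : ℕ} (e : (Fin k → ℝ) →ₗ[ℝ] (Fin m → ℝ)) (f : MvPolynomial (Fin m) ℂ)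
    (v w : Fin k → ℝ) :
    line (cvec v) (cvec w) (subst e f) = line (cvec (e v)) (cvec (e w)) f := by
  have : (line (cvec v) (cvec w)).comp (subst e) = line (cvec (e v)) (cvec (e w)) := by
    refine algHom_ext fun i => ?_
    rw [AlgHom.comp_apply, subst_X, line_linC]
    simp [line]
  exact congrArg (fun F => F f) this

lemma X_pow_dvd_line_of_isHomogeneous {m e : ℕ} {f : MvPolynomial (Fin m) ℂ}
    (hf : f.IsHomogeneous e) (w : Fin m → ℂ) : Polynomial.X ^ e ∣ line 0 w f := by
  refine ⟨Polynomial.C (eval w f), Polynomial.funext fun t => ?_⟩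
  rw [eval_line, zero_add]
  simp only [Polynomial.eval_mul, Polynomial.eval_pow, Polynomial.eval_X, Polynomial.eval_C]
  rw [eval_eq', eval_eq', Finset.mul_sum]
  refine Finset.sum_congr rfl fun d hd => ?_
  have he : ∑ i, d i = e := by
    rw [← hf (mem_support_iff.1 hd), Finsupp.weight_apply, Finsupp.sum_fintype _ _ (by simp)]
    simp
  simp only [Pi.smul_apply, smul_eq_mul, mul_pow, Finset.prod_mul_distrib,
    Finset.prod_pow_eq_pow_sum, he]
  ring

/-- The correction term in the vanishing order along a subspace: zero if the cone spans the
subspace, one otherwise. -/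
def defect {m : ℕ} (K : PointedCone ℝ (Fin m → ℝ)) (L : Submodule ℝ (Fin m → ℝ)) : ℕ :=
  open Classical in
  if Submodule.span ℝ ((K : Set (Fin m → ℝ)) ∩ L) = L then 0 else 1

/-- `f` vanishes along every linear subspace `L` to order at least
`#{i ∈ S | φᵢ = 0 on L} - codim L`, plus one if `L` is not spanned by its intersection with the
cone `K`. The forms `φᵢ` may be proportional. -/
def AdjointCond {m : ℕ} {ι : Type*} (K : PointedCone ℝ (Fin m → ℝ)) (S : Finset ι)
    (φ : ι → Dual ℝ (Fin m → ℝ)) (f : MvPolynomial (Fin m) ℂ) : Prop :=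
  open Classical in
  ∀ (L : Submodule ℝ (Fin m → ℝ)) (k : ℕ),
    k + m ≤ (S.filter fun i => L ≤ LinearMap.ker (φ i)).card + finrank ℝ L + defect K L →
      ∀ v ∈ L, ∀ w, Polynomial.X ^ k ∣ line (cvec v) (cvec w) f

lemma infinite_ofReal_image {p : ℝ → Prop} (b c : ℝ) (hc : c ≠ 0)
    (hp : ∀ a : ℝ, b + a * c ≠ 0 → p a) : (((↑) : ℝ → ℂ) '' {a | p a}).Infinite := by
  refine Set.Infinite.image Complex.ofReal_injective.injOn ?_
  refine ((Set.finite_singleton (-b / c)).infinite_compl).mono fun a ha => hp a fun h => ?_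
  refine ha (Set.mem_singleton_iff.2 ?_)
  rw [eq_div_iff hc]
  linarith

lemma cvec_add_smul {m : ℕ} (v u : Fin m → ℝ) (a : ℝ) :
    cvec (v + a • u) = cvec v + (a : ℂ) • cvec u := by
  ext i; simp

lemma X_pow_dvd_of_C_add_mul {k : ℕ} {a b : ℂ} (ha : a ≠ 0) {q : Polynomial ℂ}
    (h : Polynomial.X ^ k ∣ (Polynomial.C a + Polynomial.X * Polynomial.C b) * q) :
    Polynomial.X ^ k ∣ q := by
  refine Polynomial.prime_X.pow_dvd_of_dvd_mul_left k (fun hX => ha ?_) h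
  have := Polynomial.X_dvd_iff.1 hX
  simpa using this

lemma X_pow_dvd_of_X_mul_C_mul {k : ℕ} {b : ℂ} (hb : b ≠ 0) {q : Polynomial ℂ}
    (h : Polynomial.X ^ (k + 1) ∣ Polynomial.X * Polynomial.C b * q) :
    Polynomial.X ^ k ∣ q := by
  rw [pow_succ', mul_assoc] at h
  have := (mul_dvd_mul_iff_left Polynomial.X_ne_zero).1 h
  rwa [(Polynomial.isUnit_C.2 hb.isUnit).dvd_mul_left] at this

/-- Deletion: dividing by one of the linear forms removes it from the arrangement. -/
lemma AdjointCond.of_linC_mul {m : ℕ} {ι : Type*} [DecidableEq ι] {K : PointedCone ℝ (Fin m → ℝ)}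
    {S : Finset ι} {φ : ι → Dual ℝ (Fin m → ℝ)} {g : MvPolynomial (Fin m) ℂ} {i : ι} (hi : i ∈ S)
    (hφ : φ i ≠ 0) (h : AdjointCond K S φ (linC (φ i) * g)) : AdjointCond K (S.erase i) φ g := by
  classical
  intro L k hk v hv w
  by_cases hL : L ≤ LinearMap.ker (φ i)
  · have hcard : (S.filter fun j => L ≤ LinearMap.ker (φ j)).card =
        ((S.erase i).filter fun j => L ≤ LinearMap.ker (φ j)).card + 1 := by
      rw [Finset.filter_erase, Finset.card_erase_add_one (Finset.mem_filter.2 ⟨hi, hL⟩)]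
    obtain ⟨z, hz⟩ := exists_apply_eq_one hφ
    have key := X_pow_dvd_line_of_infinite (k := k) (v := cvec v) (u := 0) (w := cvec w)
      (z := cvec z) (f := g) (infinite_ofReal_image (φ i w) 1 one_ne_zero fun _ h => h) ?_ 0
    · simpa using key
    · rintro _ ⟨a, ha, rfl⟩
      have h1 := h L (k + 1) (by omega) v hv (w + a • z)
      rw [map_mul, line_linC, LinearMap.mem_ker.1 (hL hv)] at h1
      rw [smul_zero, add_zero, ← cvec_add_smul]
      refine X_pow_dvd_of_X_mul_C_mul (b := ((φ i (w + a • z) : ℝ) : ℂ)) ?_ ?_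
      · rw [map_add, map_smul, hz]
        exact_mod_cast ha
      · simpa using h1
  · have hcard : (S.filter fun j => L ≤ LinearMap.ker (φ j)).card =
        ((S.erase i).filter fun j => L ≤ LinearMap.ker (φ j)).card := by
      rw [Finset.filter_erase, Finset.erase_eq_of_notMem]
      simp [hL]
    obtain ⟨u, hu, hu0⟩ := SetLike.not_le_iff_exists.1 hL
    have key := X_pow_dvd_line_of_infinite (k := k) (v := cvec v) (u := cvec u) (w := cvec w)
      (z := 0) (f := g) (infinite_ofReal_image (φ i v) (φ i u) hu0 fun _ h => h) ?_ 0
    · simpa using key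
    · rintro _ ⟨a, ha, rfl⟩
      have h1 := h L k (by omega) (v + a • u) (L.add_mem hv (L.smul_mem a hu)) w
      rw [map_mul, line_linC] at h1
      rw [smul_zero, add_zero, ← cvec_add_smul]
      refine X_pow_dvd_of_C_add_mul ?_ h1
      rw [map_add, map_smul]
      exact_mod_cast ha

lemma map_span_comap_inter {k m : ℕ} (e : (Fin k → ℝ) →ₗ[ℝ] (Fin m → ℝ))
    (K : PointedCone ℝ (Fin m → ℝ)) (L : Submodule ℝ (Fin k → ℝ)) :
    (Submodule.span ℝ ((K.comap e : Set (Fin k → ℝ)) ∩ L)).map e =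
      Submodule.span ℝ ((K : Set (Fin m → ℝ)) ∩ (L.map e)) := by
  rw [Submodule.map_span]
  congr 1
  ext x
  constructor
  · rintro ⟨y, ⟨hy, hyL⟩, rfl⟩
    exact ⟨hy, Submodule.mem_map_of_mem hyL⟩
  · rintro ⟨hx, y, hyL, rfl⟩
    exact ⟨y, ⟨hx, hyL⟩, rfl⟩

lemma defect_map {k m : ℕ} {e : (Fin k → ℝ) →ₗ[ℝ] (Fin m → ℝ)} (he : Function.Injective e)
    (K : PointedCone ℝ (Fin m → ℝ)) (L : Submodule ℝ (Fin k → ℝ)) :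
    defect K (L.map e) = defect (K.comap e) L := by
  simp only [defect, ← map_span_comap_inter, (Submodule.map_injective_of_injective he).eq_iff]

/-- Restriction to the kernel of one of the linear forms removes it from the arrangement. -/
lemma AdjointCond.subst {m : ℕ} {ι : Type*} [DecidableEq ι]
    {K : PointedCone ℝ (Fin (m + 1) → ℝ)}
    {S : Finset ι} {φ : ι → Dual ℝ (Fin (m + 1) → ℝ)} {f : MvPolynomial (Fin (m + 1)) ℂ} {i : ι}
    (hi : i ∈ S) {e : (Fin m → ℝ) →ₗ[ℝ] (Fin (m + 1) → ℝ)} (he : Function.Injective e)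
    (hr : LinearMap.range e = LinearMap.ker (φ i)) (h : AdjointCond K S φ f) :
    AdjointCond (K.comap e) (S.erase i) (fun j => φ j ∘ₗ e) (AdjointRestriction.subst e f) := by
  classical
  intro L k hk v hv w
  rw [line_subst]
  refine h (L.map e) k ?_ _ (Submodule.mem_map_of_mem hv) _
  rw [defect_map he, ← (Submodule.equivMapOfInjective e he L).finrank_eq]
  have hcard : (S.filter fun j => L.map e ≤ LinearMap.ker (φ j)).card =
      ((S.erase i).filter fun j => L ≤ LinearMap.ker (φ j ∘ₗ e)).card + 1 := by
    have : ∀ j, L.map e ≤ LinearMap.ker (φ j) ↔ L ≤ LinearMap.ker (φ j ∘ₗ e) := fun j => by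
      rw [Submodule.map_le_iff_le_comap, LinearMap.ker_comp]
    simp only [this]
    rw [Finset.filter_erase, Finset.card_erase_add_one]
    refine Finset.mem_filter.2 ⟨hi, fun x _ => ?_⟩
    exact hr.le (LinearMap.mem_range_self e x)
  beta_reduce at hk
  omega

lemma finrank_ker_of_ne_zero {m : ℕ} {φ : Dual ℝ (Fin (m + 1) → ℝ)} (h : φ ≠ 0) :
    finrank ℝ (LinearMap.ker φ) = m := by
  have := Module.Dual.finrank_ker_add_one_of_ne_zero h
  simpa using this

lemma exists_param_ker {m : ℕ} {φ : Dual ℝ (Fin (m + 1) → ℝ)} (h : φ ≠ 0) :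
    ∃ e : (Fin m → ℝ) →ₗ[ℝ] (Fin (m + 1) → ℝ), Function.Injective e ∧
      LinearMap.range e = LinearMap.ker φ := by
  have b := finBasisOfFinrankEq ℝ (LinearMap.ker φ) (finrank_ker_of_ne_zero h)
  refine ⟨(LinearMap.ker φ).subtype ∘ₗ b.equivFun.symm.toLinearMap, ?_, ?_⟩
  · exact (Submodule.subtype_injective _).comp b.equivFun.symm.injective
  · rw [LinearMap.range_comp_of_range_eq_top _ (LinearEquiv.range _), Submodule.range_subtype]

lemma linC_dvd_of_subst_eq_zero {k m : ℕ} {φ : Dual ℝ (Fin m → ℝ)} (hφ : φ ≠ 0)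
    {e : (Fin k → ℝ) →ₗ[ℝ] (Fin m → ℝ)} (hr : LinearMap.range e = LinearMap.ker φ)
    {f : MvPolynomial (Fin m) ℂ} (hf : subst e f = 0) : linC φ ∣ f := by
  refine linC_dvd_of_vanishing hφ fun x hx => ?_
  obtain ⟨y, rfl⟩ := hr.ge hx
  rw [← eval_subst, hf, map_zero]

lemma eval_eq_zero_of_X_dvd_line {m : ℕ} {v w : Fin m → ℂ} {f : MvPolynomial (Fin m) ℂ}
    (h : Polynomial.X ^ 1 ∣ line v w f) : eval v f = 0 := by
  rw [pow_one, Polynomial.X_dvd_iff, Polynomial.coeff_zero_eq_eval_zero, eval_line] at h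
  simpa using h

/-- Leaving a polyhedral cone along a ray. -/
lemma exists_exit {E ι : Type*} [AddCommGroup E] [Module ℝ E] {S : Finset ι} {φ : ι → Dual ℝ E}
    {w z : E} (hw : ∀ i ∈ S, 0 ≤ φ i w) (hz : ∃ i ∈ S, φ i z < 0) :
    ∃ t : ℝ, 0 ≤ t ∧ (∀ i ∈ S, 0 ≤ φ i (w + t • z)) ∧ ∃ i ∈ S, φ i (w + t • z) = 0 := by
  classical
  obtain ⟨i, hi, hz⟩ := hz
  obtain ⟨j, hj, hmin⟩ := Finset.exists_min_image (S.filter fun i => φ i z < 0)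
    (fun i => φ i w / (-φ i z)) ⟨i, Finset.mem_filter.2 ⟨hi, hz⟩⟩
  obtain ⟨hjS, hjz⟩ := Finset.mem_filter.1 hj
  have ht : 0 ≤ φ j w / (-φ j z) := div_nonneg (hw j hjS) (by linarith)
  refine ⟨_, ht, fun k hk => ?_, j, hjS, ?_⟩
  · rw [map_add, map_smul, smul_eq_mul]
    by_cases hkz : φ k z < 0
    · have := hmin k (Finset.mem_filter.2 ⟨hk, hkz⟩)
      rw [le_div_iff₀ (by linarith)] at this
      linarith
    · exact add_nonneg (hw k hk) (mul_nonneg ht (not_lt.1 hkz))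
  · rw [map_add, map_smul, smul_eq_mul]
    have : φ j z ≠ 0 := hjz.ne
    field_simp
    ring

/-- A cone carrying a nonzero polynomial that satisfies the vanishing conditions is cut out by the
linear forms of the arrangement. -/
theorem mem_cone_of_adjointCond {ι : Type*} (m : ℕ) : ∀ (S : Finset ι)
    (K : PointedCone ℝ (Fin m → ℝ)) (φ : ι → Dual ℝ (Fin m → ℝ)) (f : MvPolynomial (Fin m) ℂ)
    (e : ℕ), (∀ i ∈ S, φ i ≠ 0) → (∀ i ∈ S, ∀ x ∈ K, 0 ≤ φ i x) → f ≠ 0 → f.IsHomogeneous e →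
    e + m ≤ S.card → AdjointCond K S φ f → ∀ w, (∀ i ∈ S, 0 ≤ φ i w) → w ∈ K := by
  classical
  induction m with
  | zero =>
    intro S K φ f e _ _ _ _ _ _ w _
    rw [Subsingleton.elim w 0]
    exact zero_mem K
  | succ m ihm =>
    intro S
    induction S using Finset.strongInduction with
    | H S ihS =>
    intro K φ f e hφ hK hf hfe hcard hA w hw
    by_cases hdvd : ∃ i ∈ S, linC (φ i) ∣ f
    · obtain ⟨i, hi, g, rfl⟩ := hdvd
      obtain ⟨k, rfl, hk⟩ := isHomogeneous_of_linC_mul hf hfe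
      refine ihS _ (Finset.erase_ssubset hi) K φ g k (fun j hj => hφ j (Finset.mem_of_mem_erase hj))
        (fun j hj => hK j (Finset.mem_of_mem_erase hj)) (right_ne_zero_of_mul hf) hk ?_
        (hA.of_linC_mul hi (hφ i hi)) w fun j hj => hw j (Finset.mem_of_mem_erase hj)
      rw [Finset.card_erase_of_mem hi]
      omega
    · push Not at hdvd
      have hker : ∀ i ∈ S, ∀ j ∈ S, j ≠ i → ¬ LinearMap.ker (φ i) ≤ LinearMap.ker (φ j) := by
        intro i hi j hj hji hle
        refine hdvd i hi (linC_dvd_of_vanishing (hφ i hi) fun x hx => ?_)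
        refine eval_eq_zero_of_X_dvd_line (w := cvec 0) (hA (LinearMap.ker (φ i)) 1 ?_ x hx 0)
        have h2 : ({i, j} : Finset ι) ⊆
            S.filter fun k => LinearMap.ker (φ i) ≤ LinearMap.ker (φ k) := by
          intro k hk
          rcases Finset.mem_insert.1 hk with rfl | hk
          · exact Finset.mem_filter.2 ⟨hi, le_rfl⟩
          · rw [Finset.mem_singleton.1 hk]
            exact Finset.mem_filter.2 ⟨hj, hle⟩
        have h3 := Finset.card_le_card h2
        rw [Finset.card_pair hji.symm] at h3
        rw [finrank_ker_of_ne_zero (hφ i hi)]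
        omega
      have hbd : ∀ x, (∀ j ∈ S, 0 ≤ φ j x) → (∃ i ∈ S, φ i x = 0) → x ∈ K := by
        rintro x hx ⟨i, hi, hix⟩
        obtain ⟨p, hp, hr⟩ := exists_param_ker (hφ i hi)
        obtain ⟨y, rfl⟩ := hr.ge hix
        refine ihm (S.erase i) (K.comap p) (fun j => φ j ∘ₗ p) (subst p f) e ?_ ?_ ?_
          (isHomogeneous_subst p hfe) ?_ (hA.subst hi hp hr) y ?_
        · intro j hj h0
          refine hker i hi j (Finset.mem_of_mem_erase hj) (Finset.ne_of_mem_erase hj) ?_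
          rw [← hr]
          rintro _ ⟨z, rfl⟩
          exact LinearMap.congr_fun h0 z
        · exact fun j hj z hz => hK j (Finset.mem_of_mem_erase hj) _ hz
        · exact fun h0 => hdvd i hi (linC_dvd_of_subst_eq_zero (hφ i hi) hr h0)
        · rw [Finset.card_erase_of_mem hi]
          omega
        · exact fun j hj => hx j (Finset.mem_of_mem_erase hj)
      obtain rfl | hm := Nat.eq_zero_or_pos m
      · obtain ⟨i, hi⟩ : S.Nonempty := Finset.card_pos.1 (by omega)
        have hspan : Submodule.span ℝ (K : Set (Fin (0 + 1) → ℝ)) = ⊤ := by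
          by_contra hne
          refine hf (eq_zero_of_eval_cvec fun x => ?_)
          refine eval_eq_zero_of_X_dvd_line (w := cvec 0) (hA ⊤ 1 ?_ x trivial 0)
          have : defect K ⊤ = 1 := by simp [defect, hne]
          rw [this, finrank_top]
          simp
        obtain ⟨x, hx, hxi⟩ : ∃ x ∈ K, φ i x ≠ 0 := by
          by_contra! H
          refine hφ i hi (LinearMap.ker_eq_top.1 (top_le_iff.1 ?_))
          rw [← hspan]
          exact Submodule.span_le.2 H
        have hpos : 0 < φ i x := lt_of_le_of_ne (hK i hi x hx) (Ne.symm hxi)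
        have hbot : LinearMap.ker (φ i) = ⊥ :=
          Submodule.finrank_eq_zero.1 (finrank_ker_of_ne_zero (hφ i hi))
        have hwx : w = (φ i w / φ i x) • x := by
          rw [← sub_eq_zero, ← Submodule.mem_bot ℝ, ← hbot, LinearMap.mem_ker]
          simp [hxi]
        rw [hwx]
        exact K.smul_mem (div_nonneg (hw i hi) hpos.le) hx
      · obtain ⟨i, hi, j, hj, hij⟩ := Finset.one_lt_card.1 (by omega : 1 < S.card)
        obtain ⟨x, hx, hx0⟩ := SetLike.not_le_iff_exists.1 (hker i hi j hj hij.symm)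
        obtain ⟨y, hy, hy0⟩ := SetLike.not_le_iff_exists.1 (hker j hj i hi hij)
        rw [LinearMap.mem_ker] at hx hx0 hy hy0
        set z := (φ i y)⁻¹ • y - (φ j x)⁻¹ • x with hz
        have hzi : φ i z = 1 := by simp [hz, hx, hy0]
        have hzj : φ j z = -1 := by simp [hz, hy, hx0]
        obtain ⟨t, ht, h1, h2⟩ := exists_exit (z := z) hw ⟨j, hj, by rw [hzj]; norm_num⟩
        obtain ⟨s, hs, h3, h4⟩ := exists_exit (z := -z) hw ⟨i, hi, by rw [map_neg, hzi]; norm_num⟩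
        have hm1 := hbd _ h1 h2
        have hm2 := hbd _ h3 h4
        obtain rfl | ht' := ht.eq_or_lt
        · simpa using hm1
        have hst : 0 < s + t := by linarith
        have hwc : w = (s / (s + t)) • (w + t • z) + (t / (s + t)) • (w + s • -z) := by
          ext k
          simp only [Pi.add_apply, Pi.smul_apply, Pi.neg_apply, smul_eq_mul]
          field_simp
          ring
        rw [hwc]
        exact K.add_mem (K.smul_mem (div_nonneg hs hst.le) hm1)
          (K.smul_mem (div_nonneg ht hst.le) hm2)

/-- A linear form as a homogeneous polynomial of degree one. -/
def linR {m : ℕ} : Dual ℝ (Fin m → ℝ) →ₗ[ℝ] MvPolynomial (Fin m) ℝ :=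
  ∑ i, (LinearMap.toSpanSingleton ℝ _ (X i)) ∘ₗ (Dual.eval ℝ (Fin m → ℝ) (Pi.single i 1))

lemma linR_apply {m : ℕ} (φ : Dual ℝ (Fin m → ℝ)) :
    linR φ = ∑ i, C (φ (Pi.single i 1)) * X i := by
  simp [linR, smul_eq_C_mul]

@[simp] lemma eval_linR {m : ℕ} (φ : Dual ℝ (Fin m → ℝ)) (x : Fin m → ℝ) :
    eval x (linR φ) = φ x := by
  rw [linR_apply, dual_apply_eq_sum φ x]
  simp

lemma linR_injective {m : ℕ} : Function.Injective (linR (m := m)) := fun φ ψ h =>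
  LinearMap.ext fun x => by rw [← eval_linR, h, eval_linR]

lemma toC_linR {n : ℕ} (φ : Dual ℝ (Fin (n + 1) → ℝ)) : toC (linR φ) = linC φ := by
  simp [toC, linR_apply, linC]

lemma aeval_linR {m : ℕ} (φ : Dual ℝ (Fin m → ℝ)) (v : Fin m → ℂ) :
    aeval v (linR φ) = eval v (linC φ) := by
  simp [linR_apply, linC]

lemma exists_linR_eq {m : ℕ} {p : MvPolynomial (Fin m) ℝ} (hp : p.IsHomogeneous 1) :
    ∃ φ, linR φ = p := by
  have h : p ∈ Submodule.span ℝ (Set.range (X : Fin m → MvPolynomial (Fin m) ℝ)) := by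
    rw [← homogeneousSubmodule_one_eq_span_X]
    exact hp
  have hle : Submodule.span ℝ (Set.range (X : Fin m → MvPolynomial (Fin m) ℝ)) ≤
      LinearMap.range linR := by
    rw [Submodule.span_le]
    rintro _ ⟨i, rfl⟩
    refine ⟨LinearMap.proj i, ?_⟩
    rw [linR_apply, Finset.sum_eq_single i]
    · simp
    · intro j _ hj
      simp [hj.symm]
    · simp
  exact hle h

/-- The common kernel of a set of linear forms. -/
def commonKer {m : ℕ} {ι : Type*} (φ : ι → Dual ℝ (Fin m → ℝ)) (S : Finset ι) :
    Submodule ℝ (Fin m → ℝ) := (Submodule.span ℝ (φ '' S)).dualCoannihilator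

lemma mem_commonKer {m : ℕ} {ι : Type*} {φ : ι → Dual ℝ (Fin m → ℝ)} {S : Finset ι}
    {x : Fin m → ℝ} : x ∈ commonKer φ S ↔ ∀ i ∈ S, φ i x = 0 := by
  rw [commonKer, Submodule.mem_dualCoannihilator]
  constructor
  · exact fun h i hi => h _ (Submodule.subset_span ⟨i, hi, rfl⟩)
  · intro h ψ hψ
    have : Submodule.span ℝ (φ '' S) ≤ LinearMap.ker (Dual.eval ℝ _ x) := by
      rw [Submodule.span_le]
      rintro _ ⟨i, hi, rfl⟩
      exact h i hi
    exact this hψ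

lemma rkOf_add_finrank {n d : ℕ} (φ : Fin d → Dual ℝ (Fin (n + 1) → ℝ)) (S : Finset (Fin d)) :
    rkOf (fun i => linR (φ i)) S + finrank ℝ (commonKer φ S) = n + 1 := by
  have h := Subspace.finrank_add_finrank_dualCoannihilator_eq (Submodule.span ℝ (φ '' S))
  rw [Module.finrank_fin_fun] at h
  refine Eq.trans (congrArg (· + finrank ℝ (commonKer φ S)) ?_) h
  have : (fun i => linR (φ i)) '' (S : Set (Fin d)) = linR '' (φ '' S) := by
    rw [Set.image_image]
  rw [rkOf, this, ← Submodule.map_span]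
  exact (Submodule.equivMapOfInjective linR linR_injective _).finrank_eq.symm

lemma rkOf_le_card {n d : ℕ} (ℓ : Fin d → MvPolynomial (Fin (n + 1)) ℝ) (S : Finset (Fin d)) :
    rkOf ℓ S ≤ S.card := by
  classical
  rw [rkOf, ← Finset.coe_image]
  exact (finrank_span_finset_le_card _).trans Finset.card_image_le

/-- The cone on which finitely many linear forms are nonnegative. -/
def coneOf {m : ℕ} {ι : Type*} (φ : ι → Dual ℝ (Fin m → ℝ)) : PointedCone ℝ (Fin m → ℝ) where
  carrier := {x | ∀ i, 0 ≤ φ i x}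
  add_mem' hx hy i := by
    rw [map_add]
    exact add_nonneg (hx i) (hy i)
  zero_mem' i := by simp
  smul_mem' c x hx i := by
    have : c • x = (c : ℝ) • x := rfl
    rw [this, map_smul]
    exact mul_nonneg c.2 (hx i)

lemma mem_coneOf {m : ℕ} {ι : Type*} {φ : ι → Dual ℝ (Fin m → ℝ)} {x : Fin m → ℝ} :
    x ∈ coneOf φ ↔ ∀ i, 0 ≤ φ i x := Iff.rfl

/-- The embedding of `ℝⁿ` as the hyperplane at infinity. -/
def consZero (n : ℕ) : (Fin n → ℝ) →ₗ[ℝ] (Fin (n + 1) → ℝ) where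
  toFun y := Fin.cons 0 y
  map_add' x y := by
    ext i
    refine Fin.cases ?_ (fun j => ?_) i <;> simp
  map_smul' c x := by
    ext i
    refine Fin.cases ?_ (fun j => ?_) i <;> simp

@[simp] lemma consZero_zero {n : ℕ} (y : Fin n → ℝ) : consZero n y 0 = 0 := rfl

@[simp] lemma consZero_succ {n : ℕ} (y : Fin n → ℝ) (i : Fin n) : consZero n y i.succ = y i := rfl

@[simp] lemma lift1_zero {n : ℕ} (y : Fin n → ℝ) : lift1 y 0 = 1 := rfl

@[simp] lemma lift1_succ {n : ℕ} (y : Fin n → ℝ) (i : Fin n) : lift1 y i.succ = y i := rfl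

lemma consZero_injective (n : ℕ) : Function.Injective (consZero n) := fun x y h => by
  ext i
  have := congrFun h i.succ
  simpa using this

lemma lift1_add_smul {n : ℕ} (p y : Fin n → ℝ) (t : ℝ) :
    lift1 (p + t • y) = lift1 p + t • consZero n y := by
  ext i
  refine Fin.cases ?_ (fun j => ?_) i <;> simp

lemma lift1_sub_lift1 {n : ℕ} (p q : Fin n → ℝ) : lift1 p - lift1 q = consZero n (p - q) := by
  ext i
  refine Fin.cases ?_ (fun j => ?_) i <;> simp

/-- The affine dimension of a set is the dimension of the cone over it, minus one. -/
lemma finrank_span_lift1 {n : ℕ} (s : Set (Fin n → ℝ)) :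
    (finrank ℝ (Submodule.span ℝ (lift1 '' s)) : ℤ) = affDim s + 1 := by
  rcases s.eq_empty_or_nonempty with rfl | hs
  · simp [affDim]
  obtain ⟨p, hp⟩ := hs
  have hdim : affDim s = finrank ℝ (vectorSpan ℝ s) := by
    rw [affDim, if_pos ⟨p, hp⟩, direction_affineSpan]
  set D := (vectorSpan ℝ s).map (consZero n) with hD
  have hD0 : ∀ x ∈ D, x 0 = 0 := by
    rintro _ ⟨y, _, rfl⟩
    rfl
  have hsup : Submodule.span ℝ (lift1 '' s) = D ⊔ Submodule.span ℝ {lift1 p} := by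
    refine le_antisymm (Submodule.span_le.2 ?_) (sup_le ?_ ?_)
    · rintro _ ⟨q, hq, rfl⟩
      have : lift1 q = consZero n (q - p) + lift1 p := by rw [← lift1_sub_lift1]; abel
      rw [this]
      exact Submodule.add_mem_sup (Submodule.mem_map_of_mem (vsub_mem_vectorSpan ℝ hq hp))
        (Submodule.mem_span_singleton_self _)
    · rw [hD, Submodule.map_le_iff_le_comap, vectorSpan_def, Submodule.span_le]
      rintro _ ⟨q, hq, r, hr, rfl⟩
      change consZero n (q - r) ∈ Submodule.span ℝ (lift1 '' s)
      rw [← lift1_sub_lift1]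
      exact Submodule.sub_mem _ (Submodule.subset_span ⟨q, hq, rfl⟩)
        (Submodule.subset_span ⟨r, hr, rfl⟩)
    · rw [Submodule.span_singleton_le_iff_mem]
      exact Submodule.subset_span ⟨p, hp, rfl⟩
  have hdis : D ⊓ Submodule.span ℝ {lift1 p} = ⊥ := by
    rw [eq_bot_iff]
    rintro x ⟨hx, hx'⟩
    obtain ⟨c, rfl⟩ := Submodule.mem_span_singleton.1 hx'
    have := hD0 _ hx
    simp at this
    simp [this]
  have hfin := Submodule.finrank_sup_add_finrank_inf_eq D (Submodule.span ℝ {lift1 p})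
  rw [hdis, finrank_bot, ← hsup, finrank_span_singleton, hD,
    ← (Submodule.equivMapOfInjective _ (consZero_injective n) _).finrank_eq] at hfin
  · rw [hdim]
    exact_mod_cast hfin
  · intro h
    have := congrFun h 0
    simp at this

section Setup

variable {n d : ℕ} {φ : Fin d → Dual ℝ (Fin (n + 1) → ℝ)}

lemma mem_polytopeOf {y : Fin n → ℝ} :
    y ∈ polytopeOf (fun i => linR (φ i)) ↔ lift1 y ∈ coneOf φ := by
  simp [polytopeOf, mem_coneOf]

lemma mem_faceOf {y : Fin n → ℝ} {S : Finset (Fin d)} :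
    y ∈ faceOf (fun i => linR (φ i)) S ↔ lift1 y ∈ coneOf φ ∧ lift1 y ∈ commonKer φ S := by
  simp [faceOf, mem_polytopeOf, mem_commonKer]

lemma polytopeOf_nonempty (hP : IsPolytopeSetup fun i => linR (φ i)) :
    (polytopeOf fun i => linR (φ i)).Nonempty := by
  rw [Set.nonempty_iff_ne_empty]
  intro h
  have := hP.full
  rw [h, AffineSubspace.span_empty] at this
  exact AffineSubspace.bot_ne_top ℝ _ _ this

lemma eq_zero_of_consZero_mem_coneOf (hP : IsPolytopeSetup fun i => linR (φ i))
    {y : Fin n → ℝ} (hy : consZero n y ∈ coneOf φ) : y = 0 := by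
  obtain ⟨p, hp⟩ := polytopeOf_nonempty hP
  obtain ⟨R, hR⟩ := hP.compact.isBounded.exists_norm_le
  by_contra hne
  have hy0 : 0 < ‖y‖ := norm_pos_iff.2 hne
  have hR0 : 0 ≤ R := (norm_nonneg p).trans (hR p hp)
  set t := (R + ‖p‖ + 1) / ‖y‖ with ht
  have ht0 : 0 ≤ t := by positivity
  have hmem : p + t • y ∈ polytopeOf fun i => linR (φ i) := by
    rw [mem_polytopeOf, lift1_add_smul]
    exact add_mem (mem_polytopeOf.1 hp) ((coneOf φ).smul_mem ht0 hy)
  have h1 := hR _ hmem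
  have h2 : ‖t • y‖ = R + ‖p‖ + 1 := by
    rw [norm_smul, Real.norm_of_nonneg ht0, ht, div_mul_cancel₀ _ hy0.ne']
  have h3 := norm_sub_le (p + t • y) p
  rw [add_sub_cancel_left, h2] at h3
  linarith

lemma eq_consZero {x : Fin (n + 1) → ℝ} (hx : x 0 = 0) : x = consZero n (Fin.tail x) := by
  ext i
  refine Fin.cases ?_ (fun j => ?_) i
  · simp [hx]
  · simp [Fin.tail]

/-- The cone lies over the polytope. -/
lemma zero_lt_of_mem_coneOf (hP : IsPolytopeSetup fun i => linR (φ i))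
    {x : Fin (n + 1) → ℝ} (hx : x ∈ coneOf φ) (hx0 : x ≠ 0) : 0 < x 0 := by
  have hinf : ∀ z : Fin (n + 1) → ℝ, z ∈ coneOf φ → z 0 = 0 → z = 0 := by
    intro z hz hz0
    rw [eq_consZero hz0] at hz ⊢
    rw [eq_zero_of_consZero_mem_coneOf hP hz, map_zero]
  by_contra hneg
  have hlt : x 0 < 0 := lt_of_le_of_ne (not_lt.1 hneg) fun h => hx0 (hinf x hx h)
  have hp : ∀ p ∈ polytopeOf (fun i => linR (φ i)), x = (x 0) • lift1 p := by
    intro p hp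
    have h1 := hinf (x + (-x 0) • lift1 p)
      (add_mem hx ((coneOf φ).smul_mem (by linarith) (mem_polytopeOf.1 hp))) (by simp)
    rw [neg_smul, ← sub_eq_add_neg, sub_eq_zero] at h1
    exact h1
  have hsub : (polytopeOf fun i => linR (φ i)).Subsingleton := by
    intro p hp1 q hq1
    have h1 : (x 0) • lift1 p = (x 0) • lift1 q := by rw [← hp p hp1, ← hp q hq1]
    have h2 := smul_right_injective _ hlt.ne h1
    ext i
    simpa using congrFun h2 i.succ
  have hfull := hP.full
  obtain ⟨p, hp1⟩ := polytopeOf_nonempty hP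
  rw [hsub.eq_singleton_of_mem hp1] at hfull
  have hd := congrArg AffineSubspace.direction hfull
  rw [direction_affineSpan, vectorSpan_singleton, AffineSubspace.direction_top] at hd
  have h3 := congrArg (fun M : Submodule ℝ (Fin n → ℝ) => finrank ℝ M) hd
  simp at h3
  have := hP.one_le
  omega

lemma span_coneOf_inter (hP : IsPolytopeSetup fun i => linR (φ i)) (S : Finset (Fin d)) :
    Submodule.span ℝ ((coneOf φ : Set (Fin (n + 1) → ℝ)) ∩ commonKer φ S) =
      Submodule.span ℝ (lift1 '' faceOf (fun i => linR (φ i)) S) := by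
  refine le_antisymm (Submodule.span_le.2 ?_) (Submodule.span_mono ?_)
  · rintro x ⟨hx, hxS⟩
    by_cases hx0 : x = 0
    · rw [hx0]
      exact zero_mem _
    have hpos := zero_lt_of_mem_coneOf hP hx hx0
    have hl : lift1 ((x 0)⁻¹ • Fin.tail x) = (x 0)⁻¹ • x := by
      ext i
      refine Fin.cases ?_ (fun j => ?_) i
      · simp [hpos.ne']
      · simp [Fin.tail]
    have hx1 : x = (x 0) • lift1 ((x 0)⁻¹ • Fin.tail x) := by
      rw [hl, smul_smul, mul_inv_cancel₀ hpos.ne', one_smul]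
    rw [hx1]
    refine Submodule.smul_mem _ _ (Submodule.subset_span ⟨_, mem_faceOf.2 ?_, rfl⟩)
    rw [hl]
    exact ⟨(coneOf φ).smul_mem (inv_nonneg.2 hpos.le) hx, (commonKer φ S).smul_mem _ hxS⟩
  · rintro _ ⟨y, hy, rfl⟩
    exact mem_faceOf.1 hy

lemma finrank_span_coneOf_inter (hP : IsPolytopeSetup fun i => linR (φ i)) (S : Finset (Fin d)) :
    (finrank ℝ (Submodule.span ℝ ((coneOf φ : Set (Fin (n + 1) → ℝ)) ∩ commonKer φ S)) : ℤ) =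
      affDim (faceOf (fun i => linR (φ i)) S) + 1 := by
  rw [span_coneOf_inter hP, finrank_span_lift1]

lemma span_coneOf_inter_eq_iff (hP : IsPolytopeSetup fun i => linR (φ i)) (S : Finset (Fin d)) :
    Submodule.span ℝ ((coneOf φ : Set (Fin (n + 1) → ℝ)) ∩ commonKer φ S) = commonKer φ S ↔
      affDim (faceOf (fun i => linR (φ i)) S) = (n : ℤ) - rkOf (fun i => linR (φ i)) S := by
  have h1 := finrank_span_coneOf_inter hP S
  have h2 := rkOf_add_finrank φ S
  have hle : Submodule.span ℝ ((coneOf φ : Set (Fin (n + 1) → ℝ)) ∩ commonKer φ S) ≤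
      commonKer φ S := Submodule.span_le.2 Set.inter_subset_right
  constructor
  · intro h
    rw [h] at h1
    omega
  · intro h
    exact Submodule.eq_of_le_of_finrank_eq hle (by omega)

lemma form_ne_zero (hP : IsPolytopeSetup fun i => linR (φ i)) (i : Fin d) : φ i ≠ 0 := fun h =>
  hP.ne_zero i (by simp [h])

lemma succ_le_card (hP : IsPolytopeSetup fun i => linR (φ i)) : n + 1 ≤ d := by
  by_contra hlt
  have hne : commonKer φ Finset.univ ≠ ⊥ := by
    intro hbot
    have h2 := rkOf_add_finrank φ Finset.univ
    rw [hbot, finrank_bot] at h2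
    have h3 := rkOf_le_card (fun i => linR (φ i)) Finset.univ
    rw [Finset.card_univ, Fintype.card_fin] at h3
    omega
  obtain ⟨x, hx, hx0⟩ := Submodule.exists_mem_ne_zero_of_ne_bot hne
  rw [mem_commonKer] at hx
  have h1 := zero_lt_of_mem_coneOf hP (x := x)
    (fun i => (hx i (Finset.mem_univ i)).ge) hx0
  have h2 := zero_lt_of_mem_coneOf hP (x := -x)
    (fun i => by rw [map_neg, hx i (Finset.mem_univ i), neg_zero]) (neg_ne_zero.2 hx0)
  simp at h2
  linarith

end Setup

lemma X_dvd_line_of_eval_eq_zero {m : ℕ} {p : MvPolynomial (Fin m) ℂ}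
    {v : Fin m → ℂ} (hv : eval v p = 0) (w : Fin m → ℂ) :
    Polynomial.X ∣ line v w p := by
  rw [Polynomial.X_dvd_iff, Polynomial.coeff_zero_eq_eval_zero, eval_line]
  simpa using hv

lemma X_pow_dvd_line_of_mem_pointIdeal {n k : ℕ} {v : Fin (n + 1) → ℂ}
    {f : MvPolynomial (Fin (n + 1)) ℂ} (hf : f ∈ pointIdeal v ^ k) (w : Fin (n + 1) → ℂ) :
    Polynomial.X ^ k ∣ line v w f := by
  have hle : pointIdeal v ≤ (Ideal.span {(Polynomial.X : Polynomial ℂ)}).comap (line v w) := by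
    rw [pointIdeal, Ideal.span_le]
    rintro p ⟨-, hv⟩
    exact Ideal.mem_span_singleton.2 (X_dvd_line_of_eval_eq_zero hv w)
  have h1 := (Ideal.pow_right_mono hle k).trans (Ideal.le_comap_pow (line v w) k) hf
  rwa [Ideal.mem_comap, Ideal.span_singleton_pow, Ideal.mem_span_singleton] at h1

lemma defect_le_one {m : ℕ} (K : PointedCone ℝ (Fin m → ℝ)) (L : Submodule ℝ (Fin m → ℝ)) :
    defect K L ≤ 1 := by
  unfold defect
  split_ifs <;> simp

lemma defect_bot {m : ℕ} (K : PointedCone ℝ (Fin m → ℝ)) : defect K ⊥ = 0 := by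
  rw [defect, if_pos]
  refine le_antisymm (Submodule.span_le.2 Set.inter_subset_right) bot_le

section Vanishing

variable {n d : ℕ} {φ : Fin d → Dual ℝ (Fin (n + 1) → ℝ)}

lemma ordOf_eq (hP : IsPolytopeSetup fun i => linR (φ i)) (v : Fin (n + 1) → ℂ) :
    ordOf (fun i => linR (φ i)) v =
      (flatOf (fun i => linR (φ i)) v).card -
        rkOf (fun i => linR (φ i)) (flatOf (fun i => linR (φ i)) v) +
        defect (coneOf φ) (commonKer φ (flatOf (fun i => linR (φ i)) v)) := by
  rw [ordOf, defect]
  by_cases h : affDim (faceOf (fun i => linR (φ i)) (flatOf (fun i => linR (φ i)) v)) =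
      (n : ℤ) - rkOf (fun i => linR (φ i)) (flatOf (fun i => linR (φ i)) v)
  · rw [if_pos h, if_pos ((span_coneOf_inter_eq_iff hP _).2 h), add_zero]
  · rw [if_neg h, if_neg (mt (span_coneOf_inter_eq_iff hP _).1 h)]

lemma mem_flatOf_cvec {x : Fin (n + 1) → ℝ} {i : Fin d} :
    i ∈ flatOf (fun i => linR (φ i)) (cvec x) ↔ φ i x = 0 := by
  simp [flatOf, aeval_linR]

/-- Vanishing conditions at real points imply vanishing conditions along all subspaces. -/
lemma adjointCond_of_vanishing (hP : IsPolytopeSetup fun i => linR (φ i))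
    {f : MvPolynomial (Fin (n + 1)) ℂ} (hf : f.IsHomogeneous (d - n - 1))
    (hvan : ∀ v : Fin (n + 1) → ℝ, v ≠ 0 →
      f ∈ pointIdeal (cvec v) ^ ordOf (fun i => linR (φ i)) (cvec v)) :
    AdjointCond (coneOf φ) Finset.univ φ f := by
  classical
  intro L k hk v hv w
  set T := Finset.univ.filter fun i => L ≤ LinearMap.ker (φ i) with hT
  have hLT : L ≤ commonKer φ T := fun x hx => mem_commonKer.2 fun i hi =>
    (Finset.mem_filter.1 hi).2 hx
  have hk' : k + (n + 1) ≤ T.card + finrank ℝ (commonKer φ T) +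
      defect (coneOf φ) (commonKer φ T) := by
    by_cases hEq : L = commonKer φ T
    · rwa [← hEq]
    · have h1 := Submodule.finrank_lt_finrank_of_lt (lt_of_le_of_ne hLT hEq)
      have h2 := defect_le_one (coneOf φ) L
      omega
  have hvT := hLT hv
  by_cases hbot : commonKer φ T = ⊥
  · rw [hbot, finrank_bot, defect_bot] at hk'
    rw [hbot, Submodule.mem_bot] at hvT
    have hTd : T.card ≤ d := by simpa using Finset.card_le_univ T
    have h0 : cvec v = 0 := by ext i; simp [hvT]
    rw [h0]
    exact (pow_dvd_pow _ (by omega)).trans (X_pow_dvd_line_of_isHomogeneous hf _)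
  obtain ⟨x, hx, hx0⟩ := Submodule.exists_mem_ne_zero_of_ne_bot hbot
  obtain ⟨c, hc⟩ := Function.ne_iff.1 hx0
  let ψ : Option {j // j ∉ T} → Dual ℝ (Fin (n + 1) → ℝ) := fun o =>
    o.elim (LinearMap.proj c) fun j => φ j
  obtain ⟨u, hu, hu0⟩ : ∃ u ∈ commonKer φ T, ∀ o, ψ o u ≠ 0 := by
    refine Module.Dual.exists_forall_mem_ne_zero_of_forall_exists _ ψ fun o => ?_
    rcases o with _ | ⟨j, hj⟩
    · exact ⟨x, hx, hc⟩
    · have : ¬ L ≤ LinearMap.ker (φ j) := fun h => hj (Finset.mem_filter.2 ⟨Finset.mem_univ _, h⟩)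
      obtain ⟨y, hy, hy0⟩ := SetLike.not_le_iff_exists.1 this
      exact ⟨y, hLT hy, hy0⟩
  have hinf : (((↑) : ℝ → ℂ) '' {a | ∀ o, ψ o (v + a • u) ≠ 0}).Infinite := by
    refine Set.Infinite.image Complex.ofReal_injective.injOn ?_
    refine ((Set.finite_range fun o => -(ψ o v) / ψ o u).infinite_compl).mono fun a ha o h => ?_
    refine ha ⟨o, ?_⟩
    rw [map_add, map_smul, smul_eq_mul] at h
    change -(ψ o v) / ψ o u = a
    rw [div_eq_iff (hu0 o)]
    linarith
  have key := X_pow_dvd_line_of_infinite (k := k) (v := cvec v) (u := cvec u) (w := cvec w)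
    (z := 0) (f := f) hinf ?_ 0
  · simpa using key
  · rintro _ ⟨a, ha, rfl⟩
    rw [smul_zero, add_zero, ← cvec_add_smul]
    have hmem : v + a • u ∈ commonKer φ T := add_mem hvT (Submodule.smul_mem _ a hu)
    have hne : v + a • u ≠ 0 := fun h => ha none (by rw [h, map_zero])
    have hflat : flatOf (fun i => linR (φ i)) (cvec (v + a • u)) = T := by
      ext j
      rw [mem_flatOf_cvec]
      refine ⟨fun h => ?_, fun h => mem_commonKer.1 hmem j h⟩
      by_contra hj
      exact ha (some ⟨j, hj⟩) h
    have h1 := hvan _ hne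
    have h2 := rkOf_add_finrank φ T
    rw [ordOf_eq hP, hflat] at h1
    exact (pow_dvd_pow _ (by omega)).trans (X_pow_dvd_line_of_mem_pointIdeal h1 _)

lemma faceOf_singleton (i : Fin d) :
    faceOf (fun i => linR (φ i)) {i} = facetOf (fun i => linR (φ i)) i := by
  simp [faceOf, facetOf]

lemma faceOf_pair (i j : Fin d) :
    faceOf (fun i => linR (φ i)) {i, j} =
      facetOf (fun i => linR (φ i)) j ∩ facetOf (fun i => linR (φ i)) i := by
  ext y
  simp only [faceOf, facetOf, Set.mem_ofPred_eq, Set.mem_inter_iff, Finset.mem_insert,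
    Finset.mem_singleton, forall_eq_or_imp, forall_eq]
  tauto

lemma commonKer_singleton (i : Fin d) : commonKer φ {i} = LinearMap.ker (φ i) := by
  ext x
  simp [mem_commonKer]

lemma not_ker_le_ker (hP : IsPolytopeSetup fun i => linR (φ i)) {i j : Fin d} (hij : i ≠ j) :
    ¬ LinearMap.ker (φ i) ≤ LinearMap.ker (φ j) := by
  intro hle
  obtain ⟨h, hh⟩ := exists_apply_eq_one (form_ne_zero hP i)
  refine hP.not_proportional i j hij (φ j h) ?_
  rw [← map_smul]
  refine congrArg linR (LinearMap.ext fun x => ?_)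
  have := LinearMap.mem_ker.1 (hle (x := x - φ i x • h) (by simp [hh]))
  rw [map_sub, map_smul, sub_eq_zero, smul_eq_mul] at this
  rw [LinearMap.smul_apply, smul_eq_mul, this, mul_comm]

lemma span_coneOf_inter_ker (hP : IsPolytopeSetup fun i => linR (φ i)) (i : Fin d) :
    Submodule.span ℝ ((coneOf φ : Set (Fin (n + 1) → ℝ)) ∩ LinearMap.ker (φ i)) =
      LinearMap.ker (φ i) := by
  rw [← commonKer_singleton, span_coneOf_inter_eq_iff hP, faceOf_singleton, hP.facet_dim]
  have := rkOf_add_finrank φ {i}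
  rw [commonKer_singleton, finrank_ker_of_ne_zero (form_ne_zero hP i)] at this
  omega

/-- A point in the relative interior of a facet. -/
lemma exists_mem_facet_interior (hP : IsPolytopeSetup fun i => linR (φ i)) (i : Fin d) :
    ∃ x, φ i x = 0 ∧ ∀ j, j ≠ i → 0 < φ j x := by
  classical
  have h : ∀ j, ∃ y ∈ coneOf φ, φ i y = 0 ∧ (j ≠ i → 0 < φ j y) := by
    intro j
    by_cases hj : j = i
    · exact ⟨0, zero_mem _, map_zero _, fun h => absurd hj h⟩
    by_contra! H
    refine not_ker_le_ker hP (Ne.symm hj) ?_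
    rw [← span_coneOf_inter_ker hP i, Submodule.span_le]
    rintro y ⟨hy, hy0⟩
    exact le_antisymm (H y hy hy0).2 (hy j)
  choose y hy hyi hyj using h
  refine ⟨∑ j, y j, by simp [hyi], fun j hj => ?_⟩
  rw [map_sum]
  exact Finset.sum_pos' (fun k _ => hy k j) ⟨j, Finset.mem_univ j, hyj j hj⟩

/-- A nonzero polynomial satisfying the vanishing conditions of a polytope does not vanish on any
facet hyperplane. -/
lemma not_linC_dvd (hP : IsPolytopeSetup fun i => linR (φ i))
    {f : MvPolynomial (Fin (n + 1)) ℂ} (hf0 : f ≠ 0) (hf : f.IsHomogeneous (d - n - 1))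
    (hA : AdjointCond (coneOf φ) Finset.univ φ f) (i : Fin d) : ¬ linC (φ i) ∣ f := by
  classical
  rintro ⟨g, rfl⟩
  obtain ⟨k, hk, hg⟩ := isHomogeneous_of_linC_mul hf0 hf
  have hd := succ_le_card hP
  obtain ⟨x, hxi, hx⟩ := exists_mem_facet_interior hP i
  obtain ⟨h, hh⟩ := exists_apply_eq_one (form_ne_zero hP i)
  have hev : ∀ᶠ ε in nhdsWithin (0 : ℝ) (Set.Ioi 0), ∀ j, j ≠ i → 0 < φ j (x - ε • h) := by
    refine Filter.eventually_all.2 fun j => ?_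
    by_cases hj : j = i
    · exact Filter.Eventually.of_forall fun _ h => absurd hj h
    have hc : Continuous fun ε : ℝ => φ j (x - ε • h) := by
      simp only [map_sub, map_smul, smul_eq_mul]
      fun_prop
    have := hc.continuousAt.eventually_const_lt
      (show 0 < φ j (x - (0 : ℝ) • h) by simpa using hx j hj)
    exact (this.filter_mono nhdsWithin_le_nhds).mono fun _ h _ => h
  obtain ⟨ε, hε, hpos⟩ := (hev.and self_mem_nhdsWithin).exists
  have hmem := mem_cone_of_adjointCond (n + 1) (Finset.univ.erase i) (coneOf φ) φ g k
    (fun j _ => form_ne_zero hP j) (fun j _ y hy => hy j) (right_ne_zero_of_mul hf0) hg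
    (by
      rw [Finset.card_erase_of_mem (Finset.mem_univ i), Finset.card_univ, Fintype.card_fin]
      omega)
    (hA.of_linC_mul (Finset.mem_univ i) (form_ne_zero hP i)) (x - ε • h)
    fun j hj => (hε j (Finset.ne_of_mem_erase hj)).le
  have := hmem i
  rw [map_sub, map_smul, hxi, hh] at this
  have hpos' : 0 < ε := hpos
  simp at this
  linarith

end Vanishing

lemma eval_linC_add {m : ℕ} (φ : Dual ℝ (Fin m → ℝ)) (x y : Fin m → ℂ) :
    eval (x + y) (linC φ) = eval x (linC φ) + eval y (linC φ) := by
  simp [eval_linC, mul_add, Finset.sum_add_distrib]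

lemma eval_linC_smul {m : ℕ} (φ : Dual ℝ (Fin m → ℝ)) (a : ℂ) (x : Fin m → ℂ) :
    eval (a • x) (linC φ) = a * eval x (linC φ) := by
  simp [eval_linC, Finset.mul_sum, mul_left_comm]

/-- The real part of a complex vector. -/
def reVec {m : ℕ} (v : Fin m → ℂ) : Fin m → ℝ := fun i => (v i).re

/-- The imaginary part of a complex vector. -/
def imVec {m : ℕ} (v : Fin m → ℂ) : Fin m → ℝ := fun i => (v i).im

lemma cvec_reVec_add {m : ℕ} (v : Fin m → ℂ) :
    cvec (reVec v) + Complex.I • cvec (imVec v) = v := by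
  ext i
  simp only [Pi.add_apply, Pi.smul_apply, cvec_apply, reVec, imVec, smul_eq_mul]
  rw [mul_comm, Complex.re_add_im]

lemma eval_linC_eq_zero_iff {m : ℕ} (φ : Dual ℝ (Fin m → ℝ)) (v : Fin m → ℂ) :
    eval v (linC φ) = 0 ↔ φ (reVec v) = 0 ∧ φ (imVec v) = 0 := by
  conv_lhs => rw [← cvec_reVec_add v, eval_linC_add, eval_linC_smul, eval_cvec_linC,
    eval_cvec_linC, mul_comm]
  rw [Complex.ext_iff]
  simp

/-- Vanishing to order at least `k` along a real subspace extends to its complex points. -/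
lemma X_pow_dvd_line_of_real {m k : ℕ} {L W : Submodule ℝ (Fin m → ℝ)}
    {g : MvPolynomial (Fin m) ℂ}
    (h : ∀ u ∈ L, ∀ w ∈ W, Polynomial.X ^ k ∣ line (cvec u) (cvec w) g) {v w : Fin m → ℂ}
    (hv : reVec v ∈ L) (hv' : imVec v ∈ L) (hw : reVec w ∈ W) (hw' : imVec w ∈ W) :
    Polynomial.X ^ k ∣ line v w g := by
  rw [← cvec_reVec_add v, ← cvec_reVec_add w]
  refine X_pow_dvd_line_of_infinite
    (Set.infinite_range_of_injective Complex.ofReal_injective) ?_ Complex.I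
  rintro _ ⟨a, rfl⟩
  rw [← cvec_add_smul, ← cvec_add_smul]
  exact h _ (add_mem hv (L.smul_mem a hv')) _ (add_mem hw (W.smul_mem a hw'))

lemma reVec_smul_mem {m : ℕ} {L : Submodule ℝ (Fin m → ℝ)} {v : Fin m → ℂ} (hv : reVec v ∈ L)
    (hv' : imVec v ∈ L) (a : ℂ) : reVec (a • v) ∈ L ∧ imVec (a • v) ∈ L := by
  have h1 : reVec (a • v) = a.re • reVec v - a.im • imVec v := by
    ext i; simp [reVec, imVec]
  have h2 : imVec (a • v) = a.re • imVec v + a.im • reVec v := by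
    ext i; simp [reVec, imVec]
  rw [h1, h2]
  exact ⟨sub_mem (L.smul_mem _ hv) (L.smul_mem _ hv'), add_mem (L.smul_mem _ hv') (L.smul_mem _ hv)⟩

/-- Vanishing along lines in a hyperplane gives vanishing in the coordinate ring of the
hyperplane. -/
lemma restrictionVanishes_of_line {n k : ℕ} {φ : Dual ℝ (Fin (n + 1) → ℝ)} (hφ : φ ≠ 0)
    {g : MvPolynomial (Fin (n + 1)) ℂ} {v : Fin (n + 1) → ℂ} (hv0 : v ≠ 0)
    (hv : eval v (linC φ) = 0)
    (h : ∀ (a : ℂ) (w : Fin (n + 1) → ℂ), eval w (linC φ) = 0 →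
      Polynomial.X ^ k ∣ line (a • v) w g) :
    RestrictionVanishes (linC φ) g v k := by
  obtain ⟨c, hc⟩ := Function.ne_iff.1 hv0
  obtain ⟨b, hb⟩ := exists_apply_eq_one hφ
  let lam : MvPolynomial (Fin (n + 1)) ℂ := C (v c)⁻¹ * X c
  let Q : Fin (n + 1) → MvPolynomial (Fin (n + 1)) ℂ := fun i =>
    X i - C (b i : ℂ) * linC φ - C (v i) * lam
  have hlam : lam.IsHomogeneous 1 := by
    simpa using (isHomogeneous_C _ _).mul (isHomogeneous_X ℂ c)
  have hQ : ∀ i, Q i ∈ pointIdeal v := by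
    intro i
    refine Ideal.subset_span ⟨?_, ?_⟩
    · refine ((isHomogeneous_X ℂ i).sub ?_).sub ?_
      · simpa using (isHomogeneous_C _ (b i : ℂ)).mul (linC_isHomogeneous φ)
      · simpa using (isHomogeneous_C _ (v i)).mul hlam
    · have : v c ≠ 0 := hc
      simp [Q, lam, hv, this]
  let G : MvPolynomial (Fin (n + 1)) ℂ →ₐ[ℂ] Polynomial (MvPolynomial (Fin (n + 1)) ℂ) :=
    aeval fun i => Polynomial.C (C (v i) * lam) + Polynomial.X * Polynomial.C (Q i)
  have hG : ∀ p, G p ∈ reesAlgebra (pointIdeal v) := by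
    intro p
    induction p using MvPolynomial.induction_on with
    | C a =>
      have : G (C a) = algebraMap _ _ (C a : MvPolynomial (Fin (n + 1)) ℂ) := by
        simp [G]
      rw [this]
      exact Subalgebra.algebraMap_mem _ _
    | add p q hp hq => rw [map_add]; exact add_mem hp hq
    | mul_X p i hp =>
      rw [map_mul]
      refine mul_mem hp ?_
      have hX : G (X i) = algebraMap _ _ (C (v i) * lam) + Polynomial.monomial 1 (Q i) := by
        simp only [G, aeval_X, Polynomial.algebraMap_eq]
        rw [← Polynomial.C_mul_X_pow_eq_monomial, pow_one, mul_comm Polynomial.X]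
      rw [hX]
      refine add_mem (Subalgebra.algebraMap_mem _ _) (reesAlgebra.monomial_mem.2 ?_)
      rw [pow_one]
      exact hQ i
  have hcoeff : ∀ j < k, (G g).coeff j = 0 := by
    intro j hj
    refine MvPolynomial.funext fun x => ?_
    set w : Fin (n + 1) → ℂ := fun i => eval x (Q i) with hw
    have hline : (G g).map (eval x) = line (eval x lam • v) w g := by
      have : (Polynomial.mapAlgHom (aeval x : MvPolynomial (Fin (n + 1)) ℂ →ₐ[ℂ] ℂ)).comp G =
          line (eval x lam • v) w := by
        refine algHom_ext fun i => ?_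
        simp [G, line, hw, mul_comm (eval x lam)]
      exact congrArg (fun F => F g) this
    have hw0 : eval w (linC φ) = 0 := by
      have hwx : w = x + (-(eval x (linC φ))) • cvec b + (-(eval x lam)) • v := by
        ext i
        simp [hw, Q]
        ring
      rw [hwx, eval_linC_add, eval_linC_add, eval_linC_smul, eval_linC_smul, hv, eval_cvec_linC, hb]
      simp
    have := Polynomial.X_pow_dvd_iff.1 (h (eval x lam) w hw0) j hj
    rw [← hline, Polynomial.coeff_map] at this
    simpa using this
  have heval : (G g).eval 1 = subst (projKer φ b) g := by
    have : ((Polynomial.aeval (1 : MvPolynomial (Fin (n + 1)) ℂ)).restrictScalars ℂ).comp G =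
        subst (projKer φ b) := by
      refine algHom_ext fun i => ?_
      refine eq_of_eval_cvec fun x => ?_
      simp [G, Q, projKer_apply, mul_comm]
    exact congrArg (fun F => F g) this
  have hmem : subst (projKer φ b) g ∈ pointIdeal v ^ k := by
    rw [← heval, Polynomial.eval_eq_sum_range]
    refine Ideal.sum_mem _ fun j _ => ?_
    rw [one_pow, mul_one]
    by_cases hj : j < k
    · rw [hcoeff j hj]
      exact zero_mem _
    · exact Ideal.pow_le_pow_right (not_lt.1 hj) (hG g j)
  rw [RestrictionVanishes, Ideal.Quotient.eq.2
    (Ideal.mem_span_singleton.2 (linC_dvd_sub_subst_projKer φ b g)), ← Ideal.map_pow]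
  exact Ideal.mem_map_of_mem _ hmem

section Facet

variable {n d : ℕ} {φ : Fin d → Dual ℝ (Fin (n + 1) → ℝ)}

lemma mem_nonIncident {i j : Fin d} :
    j ∈ nonIncident (fun i => linR (φ i)) i ↔ j ≠ i ∧
      affDim (faceOf (fun i => linR (φ i)) {i, j}) ≠ (n : ℤ) - 2 := by
  classical
  rw [nonIncident, Finset.mem_filter, faceOf_pair, Incident]
  simp only [Finset.mem_univ, true_and]
  tauto

/-- The facet hyperplane of a non-incident facet meets `Fᵢ` in too small a set. -/
lemma defect_of_mem_nonIncident (hP : IsPolytopeSetup fun i => linR (φ i)) {i j : Fin d}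
    (hj : j ∈ nonIncident (fun i => linR (φ i)) i)
    {e : (Fin n → ℝ) →ₗ[ℝ] (Fin (n + 1) → ℝ)} (he : Function.Injective e)
    (hr : LinearMap.range e = LinearMap.ker (φ i)) (h0 : φ j ∘ₗ e ≠ 0) :
    defect ((coneOf φ).comap e) (LinearMap.ker (φ j ∘ₗ e)) = 1 := by
  have hmap : (LinearMap.ker (φ j ∘ₗ e)).map e = commonKer φ {i, j} := by
    ext x
    rw [mem_commonKer]
    simp only [Finset.mem_insert, Finset.mem_singleton, forall_eq_or_imp, forall_eq]
    constructor
    · rintro ⟨y, hy, rfl⟩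
      exact ⟨hr.le (LinearMap.mem_range_self e y), hy⟩
    · rintro ⟨h1, h2⟩
      obtain ⟨y, rfl⟩ := hr.ge h1
      exact ⟨y, h2, rfl⟩
  have hfin : finrank ℝ (commonKer φ {i, j}) + 1 = n := by
    rw [← hmap, ← (Submodule.equivMapOfInjective e he _).finrank_eq,
      Module.Dual.finrank_ker_add_one_of_ne_zero h0, Module.finrank_fin_fun]
  rw [← defect_map he, hmap, defect, if_neg]
  rw [span_coneOf_inter_eq_iff hP]
  have := (mem_nonIncident.1 hj).2
  have h2 := rkOf_add_finrank φ {i, j}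
  intro h3
  apply this
  rw [h3]
  omega

/-- The restriction to a facet hyperplane is divisible by the forms of the non-incident facets, and
the quotient satisfies the vanishing conditions of the facet. -/
lemma exists_quotient (hP : IsPolytopeSetup fun i => linR (φ i)) {i : Fin d}
    {e : (Fin n → ℝ) →ₗ[ℝ] (Fin (n + 1) → ℝ)} (he : Function.Injective e)
    (hr : LinearMap.range e = LinearMap.ker (φ i)) {r : ℕ} {f : MvPolynomial (Fin n) ℂ}
    (hf0 : f ≠ 0) (hf : f.IsHomogeneous r)
    (hA : AdjointCond ((coneOf φ).comap e) (Finset.univ.erase i) (fun j => φ j ∘ₗ e) f)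
    (N : Finset (Fin d)) (hN : N ⊆ nonIncident (fun i => linR (φ i)) i) :
    ∃ (g : MvPolynomial (Fin n) ℂ) (k : ℕ), f = g * ∏ j ∈ N, linC (φ j ∘ₗ e) ∧
      g.IsHomogeneous k ∧ k + N.card = r ∧
      AdjointCond ((coneOf φ).comap e) (Finset.univ.erase i \ N) (fun j => φ j ∘ₗ e) g := by
  classical
  induction N using Finset.induction_on with
  | empty => exact ⟨f, r, by simp, hf, by simp, by simpa using hA⟩
  | insert j N hjN ih =>
    obtain ⟨g, k, hfg, hg, hk, hgA⟩ := ih ((Finset.subset_insert j N).trans hN)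
    have hj := hN (Finset.mem_insert_self j N)
    have hji := (mem_nonIncident.1 hj).1
    have h0 : φ j ∘ₗ e ≠ 0 := by
      intro h0
      refine not_ker_le_ker hP hji.symm ?_
      rw [← hr]
      rintro _ ⟨z, rfl⟩
      exact LinearMap.congr_fun h0 z
    have hjS : j ∈ Finset.univ.erase i \ N := by simp [hji, hjN]
    have hdvd : linC (φ j ∘ₗ e) ∣ g := by
      refine linC_dvd_of_vanishing h0 fun x hx => ?_
      refine eval_eq_zero_of_X_dvd_line (w := cvec 0) (hgA (LinearMap.ker (φ j ∘ₗ e)) 1 ?_ x hx 0)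
      rw [defect_of_mem_nonIncident hP hj he hr h0]
      have h1 := Module.Dual.finrank_ker_add_one_of_ne_zero h0
      rw [Module.finrank_fin_fun] at h1
      have h2 : 0 < ((Finset.univ.erase i \ N).filter fun l =>
          LinearMap.ker (φ j ∘ₗ e) ≤ LinearMap.ker (φ l ∘ₗ e)).card :=
        Finset.card_pos.2 ⟨j, Finset.mem_filter.2 ⟨hjS, le_rfl⟩⟩
      beta_reduce
      omega
    obtain ⟨q, rfl⟩ := hdvd
    obtain ⟨k', rfl, hq⟩ := isHomogeneous_of_linC_mul
      (fun h => hf0 (by rw [hfg, h, zero_mul])) hg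
    refine ⟨q, k', ?_, hq, ?_, ?_⟩
    · rw [hfg, Finset.prod_insert hjN]
      ring
    · rw [Finset.card_insert_of_notMem hjN]
      omega
    · rw [Finset.sdiff_insert]
      exact hgA.of_linC_mul (φ := fun j => φ j ∘ₗ e) hjS h0

lemma mem_facetFlatOf {i j : Fin d} {v : Fin (n + 1) → ℂ} :
    j ∈ facetFlatOf (fun i => linR (φ i)) i v ↔
      j ≠ i ∧ j ∉ nonIncident (fun i => linR (φ i)) i ∧ eval v (linC (φ j)) = 0 := by
  classical
  rw [facetFlatOf, Finset.mem_filter, nonIncident, Finset.mem_filter, aeval_linR, Incident]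
  simp only [Finset.mem_univ, true_and]
  tauto

lemma facetOrdOf_add_le (hP : IsPolytopeSetup fun i => linR (φ i)) (i : Fin d)
    (v : Fin (n + 1) → ℂ) :
    facetOrdOf (fun i => linR (φ i)) i v + n ≤
      (facetFlatOf (fun i => linR (φ i)) i v).card +
        finrank ℝ (commonKer φ (insert i (facetFlatOf (fun i => linR (φ i)) i v))) +
        defect (coneOf φ) (commonKer φ (insert i (facetFlatOf (fun i => linR (φ i)) i v))) := by
  set F := facetFlatOf (fun i => linR (φ i)) i v with hF
  have hiF : i ∉ F := fun h => (mem_facetFlatOf.1 h).1 rfl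
  have h1 := rkOf_add_finrank φ (insert i F)
  have h2 := rkOf_le_card (fun i => linR (φ i)) (insert i F)
  rw [Finset.card_insert_of_notMem hiF] at h2
  have h3 : finrank ℝ (commonKer φ (insert i F)) ≤ n := by
    refine le_of_le_of_eq (Submodule.finrank_mono fun x hx => ?_)
      (finrank_ker_of_ne_zero (form_ne_zero hP i))
    exact mem_commonKer.1 hx i (Finset.mem_insert_self i F)
  have h4 : facetRkOf (fun i => linR (φ i)) i v = rkOf (fun i => linR (φ i)) (insert i F) - 1 := rfl
  have h5 := span_coneOf_inter_eq_iff hP (insert i F)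
  rw [facetOrdOf, defect, ← hF]
  by_cases h : affDim (faceOf (fun i => linR (φ i)) (insert i F)) =
      (n : ℤ) - rkOf (fun i => linR (φ i)) (insert i F)
  · rw [if_pos (h5.2 h), if_pos (by omega)]
    omega
  · rw [if_neg (mt h5.1 h), if_neg (by omega)]
    omega

/-- The restriction theorem for facet equations given by linear forms. -/
theorem exists_restriction (hP : IsPolytopeSetup fun i => linR (φ i))
    {f : MvPolynomial (Fin (n + 1)) ℂ} (hf0 : f ≠ 0) (hf : f.IsHomogeneous (d - n - 1))
    (hvan : ∀ v : Fin (n + 1) → ℝ, v ≠ 0 →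
      f ∈ pointIdeal (cvec v) ^ ordOf (fun i => linR (φ i)) (cvec v)) (i : Fin d) :
    ∃ g : MvPolynomial (Fin (n + 1)) ℂ,
      g.IsHomogeneous (d - 1 - (nonIncident (fun i => linR (φ i)) i).card - n) ∧
      ¬ linC (φ i) ∣ g ∧
      linC (φ i) ∣ f - g * ∏ j ∈ nonIncident (fun i => linR (φ i)) i, linC (φ j) ∧
      ∀ v : Fin (n + 1) → ℂ, v ≠ 0 → eval v (linC (φ i)) = 0 →
        RestrictionVanishes (linC (φ i)) g v (facetOrdOf (fun i => linR (φ i)) i v) := by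
  classical
  have hφ := form_ne_zero hP i
  have hA := adjointCond_of_vanishing hP hf hvan
  obtain ⟨e, he, hr⟩ := exists_param_ker hφ
  have hei : ∀ y, φ i (e y) = 0 := fun y => hr.le (LinearMap.mem_range_self e y)
  have hfe : subst e f ≠ 0 := fun h =>
    not_linC_dvd hP hf0 hf hA i (linC_dvd_of_subst_eq_zero hφ hr h)
  obtain ⟨g', k, hfg, hg', hk, hgA⟩ := exists_quotient hP he hr hfe (isHomogeneous_subst e hf)
    (hA.subst (Finset.mem_univ i) he hr) _ (Finset.Subset.refl _)
  set N := nonIncident (fun i => linR (φ i)) i with hN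
  obtain ⟨b, hb⟩ := exists_apply_eq_one hφ
  obtain ⟨q₀, hq₀⟩ := LinearMap.exists_leftInverse_of_injective e (LinearMap.ker_eq_bot.2 he)
  set q := q₀ ∘ₗ projKer (φ i) b with hq
  have hqe : q ∘ₗ e = LinearMap.id := by
    refine LinearMap.ext fun y => ?_
    rw [hq, LinearMap.comp_apply, LinearMap.comp_apply, projKer_apply, hei, zero_smul, sub_zero]
    exact LinearMap.congr_fun hq₀ y
  have heq : e ∘ₗ q = projKer (φ i) b := by
    refine LinearMap.ext fun x => ?_
    obtain ⟨y, hy⟩ := hr.ge (show projKer (φ i) b x ∈ LinearMap.ker (φ i) by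
      simp [projKer_apply, hb])
    have : q x = y := by
      rw [hq, LinearMap.comp_apply, ← hy]
      exact LinearMap.congr_fun hq₀ y
    rw [LinearMap.comp_apply, this, hy]
  have hge : subst e (subst q g') = g' := by rw [subst_subst, hqe, subst_id]
  refine ⟨subst q g', ?_, ?_, ?_, ?_⟩
  · have : d - 1 - N.card - n = k := by omega
    rw [this]
    exact isHomogeneous_subst q hg'
  · rintro ⟨p, hp⟩
    apply hfe
    have h0 : φ i ∘ₗ e = 0 := LinearMap.ext hei
    rw [hfg, ← hge, hp, map_mul, subst_linC, h0]
    simp [linC]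
  · have h1 : subst (projKer (φ i) b) f =
        subst q g' * subst (projKer (φ i) b) (∏ j ∈ N, linC (φ j)) := by
      rw [← heq, ← subst_subst, hfg, map_mul, map_prod, map_prod]
      congr 1
      refine Finset.prod_congr rfl fun j _ => ?_
      rw [subst_linC, subst_linC]
      rfl
    have h2 : f - subst q g' * ∏ j ∈ N, linC (φ j) =
        (f - subst (projKer (φ i) b) f) - subst q g' *
          (∏ j ∈ N, linC (φ j) - subst (projKer (φ i) b) (∏ j ∈ N, linC (φ j))) := by
      rw [h1]
      ring
    rw [h2]
    exact dvd_sub (linC_dvd_sub_subst_projKer _ _ _)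
      ((linC_dvd_sub_subst_projKer _ _ _).mul_left _)
  · intro v hv0 hv
    set F := facetFlatOf (fun i => linR (φ i)) i v with hF
    set L := commonKer φ (insert i F) with hL
    have hLi : L ≤ LinearMap.ker (φ i) := fun x hx =>
      mem_commonKer.1 hx i (Finset.mem_insert_self i F)
    have hvF : ∀ j ∈ insert i F, eval v (linC (φ j)) = 0 := by
      intro j hj
      rcases Finset.mem_insert.1 hj with rfl | hj
      · exact hv
      · exact (mem_facetFlatOf.1 hj).2.2
    have hvL : reVec v ∈ L ∧ imVec v ∈ L :=
      ⟨mem_commonKer.2 fun j hj => ((eval_linC_eq_zero_iff _ _).1 (hvF j hj)).1,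
        mem_commonKer.2 fun j hj => ((eval_linC_eq_zero_iff _ _).1 (hvF j hj)).2⟩
    have hreal : ∀ u ∈ L, ∀ w ∈ LinearMap.ker (φ i),
        Polynomial.X ^ facetOrdOf (fun i => linR (φ i)) i v ∣
          line (cvec u) (cvec w) (subst q g') := by
      intro u hu w hw
      obtain ⟨u, rfl⟩ := hr.ge (hLi hu)
      obtain ⟨w, rfl⟩ := hr.ge hw
      rw [← line_subst, hge]
      have hmap : (L.comap e).map e = L := by
        rw [Submodule.map_comap_eq, hr, inf_eq_right.2 hLi]
      refine hgA (L.comap e) _ ?_ u hu w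
      have h1 := facetOrdOf_add_le hP i v
      rw [← hF, ← hL, ← hmap, defect_map he,
        ← (Submodule.equivMapOfInjective e he _).finrank_eq] at h1
      have h2 : F.card ≤ ((Finset.univ.erase i \ N).filter fun j =>
          L.comap e ≤ LinearMap.ker (φ j ∘ₗ e)).card := by
        refine Finset.card_le_card fun j hj => ?_
        have hj' := mem_facetFlatOf.1 hj
        refine Finset.mem_filter.2 ⟨by simp [hj'.1, hN, hj'.2.1], fun x hx => ?_⟩
        exact mem_commonKer.1 hx j (Finset.mem_insert_of_mem hj)
      beta_reduce
      omega
    refine restrictionVanishes_of_line hφ hv0 hv fun a w hw => ?_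
    obtain ⟨h1, h2⟩ := reVec_smul_mem hvL.1 hvL.2 a
    obtain ⟨h3, h4⟩ := (eval_linC_eq_zero_iff _ _).1 hw
    exact X_pow_dvd_line_of_real hreal h1 h2 h3 h4

end Facet

end AdjointRestriction

end

open MvPolynomial AdjointRestriction in
/-- Restriction to a facet: if `f ≠ 0` has degree `d - n - 1` and vanishes to order at least
`ord_P(L_v)` at every real point `v`, then modulo `ℓ_{i₀}` it is the product of the linear forms
of the facets not incident to `F_{i₀}` and a polynomial `g` of degree `d' - n` that is nonzero on
the facet hyperplane and vanishes at each of its points `v` to order at least `ord_{P'}(L'_v)`. -/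
theorem adjoint_residue_restriction {n d : ℕ}
    (ℓ : Fin d → MvPolynomial (Fin (n + 1)) ℝ) (hP : IsPolytopeSetup ℓ)
    (f : MvPolynomial (Fin (n + 1)) ℂ) (hf0 : f ≠ 0)
    (hf : f.IsHomogeneous (d - n - 1))
    (hvan : ∀ v : Fin (n + 1) → ℝ, v ≠ 0 →
      f ∈ pointIdeal (fun i => (v i : ℂ)) ^ ordOf ℓ (fun i => (v i : ℂ)))
    (i₀ : Fin d) (d' : ℕ) (hd' : d' = d - 1 - (nonIncident ℓ i₀).card) :
    ∃ g : MvPolynomial (Fin (n + 1)) ℂ,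
      g.IsHomogeneous (d' - n) ∧
      ¬ toC (ℓ i₀) ∣ g ∧
      toC (ℓ i₀) ∣ f - g * ∏ j ∈ nonIncident ℓ i₀, toC (ℓ j) ∧
      ∀ v : Fin (n + 1) → ℂ, v ≠ 0 → aeval v (ℓ i₀) = 0 →
        RestrictionVanishes (toC (ℓ i₀)) g v (facetOrdOf ℓ i₀ v) := by
  choose φ hφ using fun i => exists_linR_eq (hP.homogeneous i)
  obtain rfl : (fun i => linR (φ i)) = ℓ := funext hφ
  subst hd'
  simp only [toC_linR, aeval_linR]
  exact exists_restriction hP hf0 hf hvan i₀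
end

section
/- Let $n\ge 1$ and let $\ell_1,\dots,\ell_d\in\mathbb{R}[X_0,\dots,X_n]$ be pairwise non-proportional nonzero linear forms such that $P=\{y\in\mathbb{R}^n : \ell_i(1,y)\ge 0 \text{ for all } i\}$ is compact with affine span $\mathbb{R}^n$, and such that every $F_i=\{y\in P:\ell_i(1,y)=0\}$ has dimension $n-1$; thus the $\ell_i$ are the homogenized facet equations of the full-dimensional polytope $P$, and $d\ge n+1$. Here the dimension of a subset of $\mathbb{R}^n$ is the dimension of its affine span, and $\dim\emptyset=-1$. For $0\ne v\in\mathbb{R}^{n+1}$ let $\mathcal F_v=\{i:\ell_i(v)=0\}$, let $r_v$ be the dimension of the linear span of $\{\ell_i : i\in\mathcal F_v\}$, let $P_v=\{y\in P:\ell_i(1,y)=0 \text{ for all } i\in\mathcal F_v\}$, and set $\operatorname{ord}_P(L_v)=|\mathcal F_v|-r_v$ if $\dim P_v=n-r_v$, and $\operatorname{ord}_P(L_v)=|\mathcal F_v|-r_v+1$ otherwise. Let $I_v\subseteq\mathbb{C}[X_0,\dots,X_n]$ be the ideal generated by all linear forms vanishing at $v$. Let $f\in\mathbb{C}[X_0,\dots,X_n]$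 be homogeneous of degree $d-n-1$ and satisfy $f\in I_v^{\operatorname{ord}_P(L_v)}$ for every nonzero $v\in\mathbb{R}^{n+1}$. If $i\ne j$ are indices such that the facets $F_i$ and $F_j$ are not incident, i.e. they do not meet in a face of codimension 2: $\dim(F_i\cap F_j)\ne n-2$ (so for $n\ge 2$ disjoint facets are not incident, while the two endpoints of a segment, $n=1$, are incident since they meet in the empty face, of dimension $-1$), then $f$ lies in the ideal of $\mathbb{C}[X_0,\dots,X_n]$ generated by $\ell_i$ and $\ell_j$; in particular $f$ vanishes identically on the codimension-2 linear space $\ell_i=\ell_j=0$. -/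
open MvPolynomial

noncomputable section

namespace PolytopeAdjoint

/-- The embedding `y ↦ (1, y₁, …, yₙ)` of the affine chart. -/
def lift1 {n : ℕ} (y : Fin n → ℝ) : Fin (n + 1) → ℝ := Fin.cons 1 y

open Classical in
/-- The dimension of the affine span of a subset of `ℝⁿ`, as an integer, with the usual
convention `dim ∅ = -1`. -/
def affDim {n : ℕ} (S : Set (Fin n → ℝ)) : ℤ :=
  if S.Nonempty then (Module.finrank ℝ (affineSpan ℝ S).direction : ℤ) else -1

/-- `P = {y ∈ ℝⁿ | ℓᵢ(1,y) ≥ 0 for all i}`. -/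
def polytopeOf {n d : ℕ} (ℓ : Fin d → MvPolynomial (Fin (n + 1)) ℝ) : Set (Fin n → ℝ) :=
  {y | ∀ i, 0 ≤ eval (lift1 y) (ℓ i)}

/-- `Fᵢ = {y ∈ P | ℓᵢ(1,y) = 0}`. -/
def facetOf {n d : ℕ} (ℓ : Fin d → MvPolynomial (Fin (n + 1)) ℝ) (i : Fin d) :
    Set (Fin n → ℝ) :=
  {y ∈ polytopeOf ℓ | eval (lift1 y) (ℓ i) = 0}

/-- The linear forms `ℓ₁, …, ℓ_d` are the homogenized facet equations of a full-dimensional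
compact polytope `P ⊆ ℝⁿ`. -/
structure IsFacetSystem {n d : ℕ} (ℓ : Fin d → MvPolynomial (Fin (n + 1)) ℝ) : Prop where
  homogeneous : ∀ i, (ℓ i).IsHomogeneous 1
  ne_zero : ∀ i, ℓ i ≠ 0
  not_proportional : ∀ i j, i ≠ j → ∀ c : ℝ, c • ℓ i ≠ ℓ j
  compact : IsCompact (polytopeOf ℓ)
  full_dim : affineSpan ℝ (polytopeOf ℓ) = ⊤
  facet_dim : ∀ i, affDim (facetOf ℓ i) = (n : ℤ) - 1

/-- The facets `Fᵢ` and `Fⱼ` are incident: they meet in a face of codimension 2. The empty set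
is a face, of dimension `-1`, so the two endpoints of a segment (`n = 1`) are incident. -/
def Incident {n d : ℕ} (ℓ : Fin d → MvPolynomial (Fin (n + 1)) ℝ) (i j : Fin d) : Prop :=
  affDim (facetOf ℓ i ∩ facetOf ℓ j) = (n : ℤ) - 2

open Classical in
/-- The flat `F_v = {i | ℓᵢ(v) = 0}`. -/
def flatOf {n d : ℕ} (ℓ : Fin d → MvPolynomial (Fin (n + 1)) ℝ) (v : Fin (n + 1) → ℝ) :
    Finset (Fin d) :=
  Finset.univ.filter fun i => eval v (ℓ i) = 0

/-- The rank `r_v`: the dimension of the linear span of `{ℓᵢ : i ∈ F_v}`. -/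
def rkOf {n d : ℕ} (ℓ : Fin d → MvPolynomial (Fin (n + 1)) ℝ) (v : Fin (n + 1) → ℝ) : ℕ :=
  Module.finrank ℝ (Submodule.span ℝ (ℓ '' (flatOf ℓ v : Set (Fin d))))

/-- The nullity `nl_v = |F_v| − r_v`; the subtraction never truncates, as `r_v ≤ |F_v|`. -/
def nlOf {n d : ℕ} (ℓ : Fin d → MvPolynomial (Fin (n + 1)) ℝ) (v : Fin (n + 1) → ℝ) : ℕ :=
  (flatOf ℓ v).card - rkOf ℓ v

/-- `P_v = {y ∈ P | ℓᵢ(1,y) = 0 for all i ∈ F_v}`, the intersection of `P` with `L_v`. -/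
def faceOf {n d : ℕ} (ℓ : Fin d → MvPolynomial (Fin (n + 1)) ℝ) (v : Fin (n + 1) → ℝ) :
    Set (Fin n → ℝ) :=
  {y ∈ polytopeOf ℓ | ∀ i ∈ flatOf ℓ v, eval (lift1 y) (ℓ i) = 0}

open Classical in
/-- The order `ord_P(L_v)`: it is `nl_v` if `dim P_v = n − r_v = dim L_v`, and `nl_v + 1`
otherwise. (For `v ≠ 0` one has `r_v ≤ n`, so an empty `P_v` falls under the second case.) -/
def ordOf {n d : ℕ} (ℓ : Fin d → MvPolynomial (Fin (n + 1)) ℝ) (v : Fin (n + 1) → ℝ) : ℕ :=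
  if affDim (faceOf ℓ v) = (n : ℤ) - (rkOf ℓ v : ℤ) then nlOf ℓ v else nlOf ℓ v + 1

/-- The ideal `I_v ⊆ ℂ[X₀,…,Xₙ]` generated by all linear forms vanishing at `v`. -/
def pointIdeal {n : ℕ} (v : Fin (n + 1) → ℝ) : Ideal (MvPolynomial (Fin (n + 1)) ℂ) :=
  Ideal.span {p | p.IsHomogeneous 1 ∧ eval (fun i => (v i : ℂ)) p = 0}

/-- A real polynomial regarded as a complex one. -/
def toC {n : ℕ} (p : MvPolynomial (Fin (n + 1)) ℝ) : MvPolynomial (Fin (n + 1)) ℂ :=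
  map (algebraMap ℝ ℂ) p

end PolytopeAdjoint

end

open MvPolynomial

namespace PolytopeAdjoint

/-- A form of degree one evaluates as a linear functional. -/
theorem exists_linearMap_eval_eq {σ R : Type*} [CommRing R] {p : MvPolynomial σ R}
    (hp : p.IsHomogeneous 1) : ∃ φ : (σ → R) →ₗ[R] R, ∀ x, eval x p = φ x := by
  have hp' : p ∈ homogeneousSubmodule σ R 1 := hp
  rw [homogeneousSubmodule_one_eq_span_X] at hp'
  clear hp
  induction hp' using Submodule.span_induction with
  | mem p h =>
    obtain ⟨t, rfl⟩ := h
    exact ⟨LinearMap.proj t, fun x => by simp⟩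
  | zero => exact ⟨0, fun x => by simp⟩
  | add p q _ _ hp hq =>
    obtain ⟨φ, hφ⟩ := hp
    obtain ⟨ψ, hψ⟩ := hq
    exact ⟨φ + ψ, fun x => by simp [hφ, hψ]⟩
  | smul c p _ hp =>
    obtain ⟨φ, hφ⟩ := hp
    exact ⟨c • φ, fun x => by simp [smul_eval, hφ]⟩

theorem eval_sub_smul_sub_smul {σ R : Type*} [CommRing R] {p : MvPolynomial σ R}
    (hp : p.IsHomogeneous 1) (x u w : σ → R) (a b : R) :
    eval (x - a • u - b • w) p = eval x p - a * eval u p - b * eval w p := by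
  obtain ⟨φ, hφ⟩ := exists_linearMap_eval_eq hp
  simp [hφ]

/-- Of two linear forms `p ≠ 0` and `q` not a multiple of `p`, the second takes the value one
somewhere on the kernel of the first. -/
theorem exists_eval_eq_zero_and_eval_eq_one {σ K : Type*} [Field K] [Infinite K]
    {p q : MvPolynomial σ K} (hp : p.IsHomogeneous 1) (hq : q.IsHomogeneous 1) (hp0 : p ≠ 0)
    (hpq : ∀ c : K, c • p ≠ q) : ∃ w : σ → K, eval w p = 0 ∧ eval w q = 1 := by
  obtain ⟨φ, hφ⟩ := exists_linearMap_eval_eq hp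
  obtain ⟨ψ, hψ⟩ := exists_linearMap_eval_eq hq
  obtain ⟨z, hz⟩ : ∃ z, φ z ≠ 0 := by
    by_contra! h
    exact hp0 (MvPolynomial.funext fun x => by simp [hφ, h])
  obtain ⟨w, hw, hw'⟩ : ∃ w, φ w = 0 ∧ ψ w ≠ 0 := by
    by_contra! h
    refine hpq (ψ z / φ z) (MvPolynomial.funext fun x => ?_)
    have h1 := h (φ z • x - φ x • z) (by simp [mul_comm])
    simp only [map_sub, map_smul, smul_eq_mul] at h1
    rw [smul_eval, hφ, hψ]
    field_simp
    linear_combination -h1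
  exact ⟨(ψ w)⁻¹ • w, by simp [hφ, hw], by simp [hψ, hw']⟩

theorem eval_toC {n : ℕ} (p : MvPolynomial (Fin (n + 1)) ℝ) (v : Fin (n + 1) → ℝ) :
    eval (fun t => (v t : ℂ)) (toC p) = (eval v p : ℂ) := by
  have := (map_eval (algebraMap ℝ ℂ) v p).symm
  exact this

/-- A complex polynomial vanishing at all real points is zero. -/
theorem eq_zero_of_forall_real_eval_eq_zero {σ : Type*} {g : MvPolynomial σ ℂ}
    (h : ∀ x : σ → ℝ, eval (fun t => (x t : ℂ)) g = 0) : g = 0 := by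
  refine funext_set (fun _ => Set.range ((↑) : ℝ → ℂ))
    (fun _ => Set.infinite_range_of_injective Complex.ofReal_injective) fun x hx => ?_
  choose y hy using fun t => hx t (Set.mem_univ t)
  obtain rfl : (fun t => (y t : ℂ)) = x := _root_.funext hy
  rw [h, map_zero]

theorem eval_eq_zero_of_mem_pointIdeal {n : ℕ} {v : Fin (n + 1) → ℝ}
    {f : MvPolynomial (Fin (n + 1)) ℂ} (hf : f ∈ pointIdeal v) :
    eval (fun t => (v t : ℂ)) f = 0 := by
  have h : pointIdeal v ≤ RingHom.ker (eval fun t => (v t : ℂ)) :=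
    Ideal.span_le.2 fun p hp => hp.2
  exact h hf

/-- Substituting variables by congruent ones modulo an ideal does not change a polynomial modulo
that ideal. -/
theorem sub_bind₁_mem {σ R : Type*} [CommRing R] (J : Ideal (MvPolynomial σ R))
    {s : σ → MvPolynomial σ R} (hs : ∀ t, X t - s t ∈ J) (f : MvPolynomial σ R) :
    f - bind₁ s f ∈ J := by
  rw [← Ideal.Quotient.eq]
  have h : Ideal.Quotient.mkₐ R J = (Ideal.Quotient.mkₐ R J).comp (bind₁ s) :=
    algHom_ext fun t => by simpa using Ideal.Quotient.eq.2 (hs t)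
  exact DFunLike.congr_fun h f

/-- The order is positive along the flat spanned by two non-incident facets. -/
theorem one_le_ordOf_of_not_incident {n d : ℕ} {ℓ : Fin d → MvPolynomial (Fin (n + 1)) ℝ}
    (hP : IsFacetSystem ℓ) {i j : Fin d} (hij : i ≠ j) (hni : ¬ Incident ℓ i j)
    {v : Fin (n + 1) → ℝ} (hi : eval v (ℓ i) = 0) (hj : eval v (ℓ j) = 0)
    (hflat : ∀ k ∈ flatOf ℓ v, ℓ k ∈ Submodule.span ℝ {ℓ i, ℓ j}) : 1 ≤ ordOf ℓ v := by
  have hi' : i ∈ flatOf ℓ v := by simp [flatOf, hi]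
  have hj' : j ∈ flatOf ℓ v := by simp [flatOf, hj]
  have hrk : rkOf ℓ v = 2 := by
    have hspan : Submodule.span ℝ (ℓ '' (flatOf ℓ v : Set (Fin d))) =
        Submodule.span ℝ (Set.range ![ℓ i, ℓ j]) := by
      rw [Matrix.range_cons_cons_empty]
      apply le_antisymm
      · rw [Submodule.span_le]
        rintro _ ⟨k, hk, rfl⟩
        exact hflat k hk
      · apply Submodule.span_mono
        rintro _ (rfl | rfl)
        exacts [⟨i, hi', rfl⟩, ⟨j, hj', rfl⟩]
    rw [rkOf, hspan, finrank_span_eq_card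
      ((LinearIndependent.pair_iff' (hP.ne_zero i)).2 (hP.not_proportional i j hij))]
    simp
  have hface : faceOf ℓ v = facetOf ℓ i ∩ facetOf ℓ j := by
    ext y
    simp only [faceOf, facetOf, Set.mem_ofPred_eq, Set.mem_inter_iff]
    refine ⟨fun h => ⟨⟨h.1, h.2 i hi'⟩, h.1, h.2 j hj'⟩, fun h => ⟨h.1.1, fun k hk => ?_⟩⟩
    obtain ⟨a, b, hab⟩ := Submodule.mem_span_pair.1 (hflat k hk)
    simp [← hab, smul_eval, h.1.2, h.2.2]
  have hne : affDim (faceOf ℓ v) ≠ (n : ℤ) - (rkOf ℓ v : ℤ) := by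
    rw [hface, hrk]
    exact hni
  rw [ordOf, if_neg hne]
  exact Nat.le_add_left _ _

/-- On a segment any two distinct facets are incident. -/
theorem two_le_of_not_incident {n d : ℕ} (hn : 1 ≤ n)
    {ℓ : Fin d → MvPolynomial (Fin (n + 1)) ℝ} (hP : IsFacetSystem ℓ) {i j : Fin d}
    (hij : i ≠ j) (hni : ¬ Incident ℓ i j) : 2 ≤ n := by
  by_contra hlt
  obtain rfl : n = 1 := by omega
  apply hni
  have hempty : ¬ (facetOf ℓ i ∩ facetOf ℓ j).Nonempty := by
    rintro ⟨y, ⟨-, hi⟩, -, hj⟩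
    obtain ⟨φ, hφ⟩ := exists_linearMap_eval_eq (hP.homogeneous i)
    obtain ⟨w, hwi, hwj⟩ := exists_eval_eq_zero_and_eval_eq_one (hP.homogeneous i)
      (hP.homogeneous j) (hP.ne_zero i) (hP.not_proportional i j hij)
    obtain ⟨u, huj, hui⟩ := exists_eval_eq_zero_and_eval_eq_one (hP.homogeneous j)
      (hP.homogeneous i) (hP.ne_zero j) (hP.not_proportional j i hij.symm)
    obtain ⟨ψ, hψ⟩ := exists_linearMap_eval_eq (hP.homogeneous j)
    rw [hφ] at hi hwi hui
    rw [hψ] at hj hwj huj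
    have hsurj : Function.Surjective (φ.prod ψ) := fun ⟨a, b⟩ =>
      ⟨a • u + b • w, by simp [hui, huj, hwi, hwj]⟩
    have hinj : Function.Injective (φ.prod ψ) :=
      (LinearMap.injective_iff_surjective_of_finrank_eq_finrank (by simp)).2 hsurj
    have h0 : lift1 y = 0 := hinj (by simp [hi, hj])
    simpa [lift1] using congrFun h0 0
  simp [Incident, affDim, hempty]

end PolytopeAdjoint

open PolytopeAdjoint in
theorem adjoint_vanishes_on_nonincident_intersection {n d D : ℕ} (hn : 1 ≤ n)
    (ℓ : Fin d → MvPolynomial (Fin (n + 1)) ℝ) (hP : PolytopeAdjoint.IsFacetSystem ℓ)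
    (f : MvPolynomial (Fin (n + 1)) ℂ) (hD : D + (n + 1) = d) (hf : f.IsHomogeneous D)
    (hvan : ∀ v : Fin (n + 1) → ℝ, v ≠ 0 →
      f ∈ PolytopeAdjoint.pointIdeal v ^ PolytopeAdjoint.ordOf ℓ v)
    (i j : Fin d) (hij : i ≠ j) (hni : ¬ PolytopeAdjoint.Incident ℓ i j) :
    f ∈ Ideal.span {PolytopeAdjoint.toC (ℓ i), PolytopeAdjoint.toC (ℓ j)} ∧
      ∀ w : Fin (n + 1) → ℂ,
        MvPolynomial.eval w (PolytopeAdjoint.toC (ℓ i)) = 0 →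
        MvPolynomial.eval w (PolytopeAdjoint.toC (ℓ j)) = 0 →
        MvPolynomial.eval w f = 0 := by
  classical
  have hmem : f ∈ Ideal.span {toC (ℓ i), toC (ℓ j)} := by
    have hn2 : 2 ≤ n := two_le_of_not_incident hn hP hij hni
    obtain ⟨w, hwi, hwj⟩ := exists_eval_eq_zero_and_eval_eq_one (hP.homogeneous i)
      (hP.homogeneous j) (hP.ne_zero i) (hP.not_proportional i j hij)
    obtain ⟨u, huj, hui⟩ := exists_eval_eq_zero_and_eval_eq_one (hP.homogeneous j)
      (hP.homogeneous i) (hP.ne_zero j) (hP.not_proportional j i hij.symm)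
    -- the projection onto `ℓᵢ = ℓⱼ = 0` along `u` and `w`, and the pullback of linear forms by it
    let π : (Fin (n + 1) → ℝ) → Fin (n + 1) → ℝ := fun x =>
      x - eval x (ℓ i) • u - eval x (ℓ j) • w
    let pull : MvPolynomial (Fin (n + 1)) ℝ → MvPolynomial (Fin (n + 1)) ℝ := fun p =>
      p - eval u p • ℓ i - eval w p • ℓ j
    have eval_pull : ∀ p : MvPolynomial (Fin (n + 1)) ℝ, p.IsHomogeneous 1 → ∀ x,
        eval x (pull p) = eval (π x) p := fun p hp x => by
      simp only [pull, π, eval_sub_smul_sub_smul hp, map_sub, smul_eval]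
      ring
    obtain ⟨t₀, ht₀⟩ : ∃ t, pull (X t) ≠ 0 := by
      by_contra! h
      have htop : (⊤ : Submodule ℝ (Fin (n + 1) → ℝ)) ≤ Submodule.span ℝ {u, w} := by
        intro x _
        have hx : π x = 0 := _root_.funext fun t => by
          simpa [h t] using (eval_pull (X t) (isHomogeneous_X _ t) x).symm
        refine Submodule.mem_span_pair.2 ⟨eval x (ℓ i), eval x (ℓ j), ?_⟩
        simp only [π, sub_sub, sub_eq_zero] at hx
        exact hx.symm
      have h1 := Submodule.finrank_mono htop
      have h2 := finrank_span_finset_le_card (R := ℝ) ({u, w} : Finset (Fin (n + 1) → ℝ))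
      have h3 : ({u, w} : Finset (Fin (n + 1) → ℝ)).card ≤ 2 := Finset.card_le_two
      rw [finrank_top, Module.finrank_fin_fun] at h1
      rw [Finset.coe_pair, Set.finrank] at h2
      omega
    let s : Finset (Fin d) := Finset.univ.filter fun k => pull (ℓ k) ≠ 0
    let h : MvPolynomial (Fin (n + 1)) ℝ := pull (X t₀) * ∏ k ∈ s, pull (ℓ k)
    have h0 : h ≠ 0 := mul_ne_zero ht₀ (Finset.prod_ne_zero_iff.2 fun k hk => by
      simpa [s] using hk)
    let S : Fin (n + 1) → MvPolynomial (Fin (n + 1)) ℂ := fun t =>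
      X t - C (u t : ℂ) * toC (ℓ i) - C (w t : ℂ) * toC (ℓ j)
    have eval_subst : ∀ x : Fin (n + 1) → ℝ, eval (fun t => (x t : ℂ)) (bind₁ S f) =
        eval (fun t => (π x t : ℂ)) f := fun x => by
      have hS : (fun t => eval (fun t => (x t : ℂ)) (S t)) = fun t => (π x t : ℂ) := by
        funext t
        simp only [S, π, map_sub, map_mul, eval_X, eval_C, eval_toC, Pi.sub_apply, Pi.smul_apply,
          smul_eq_mul, Complex.ofReal_sub, Complex.ofReal_mul]
        ring
      rw [← hS]
      exact eval₂Hom_bind₁ _ _ _ _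
    have hprod : bind₁ S f * toC h = 0 := eq_zero_of_forall_real_eval_eq_zero fun x => by
      rw [map_mul, eval_toC]
      by_cases hx : eval x h = 0
      · simp [hx]
      have hx' : eval x (pull (X t₀)) ≠ 0 ∧ ∀ k ∈ s, eval x (pull (ℓ k)) ≠ 0 := by
        simpa only [h, map_mul, map_prod, mul_ne_zero_iff, Finset.prod_ne_zero_iff] using hx
      have hπ0 : π x ≠ 0 := fun h0 => hx'.1 (by
        rw [eval_pull _ (isHomogeneous_X _ t₀), h0]; simp)
      have hord : 1 ≤ ordOf ℓ (π x) := by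
        refine one_le_ordOf_of_not_incident hP hij hni ?_ ?_ fun k hk => ?_
        · simp only [π, eval_sub_smul_sub_smul (hP.homogeneous i), hui, hwi]; ring
        · simp only [π, eval_sub_smul_sub_smul (hP.homogeneous j), huj, hwj]; ring
        · have hk' : eval (π x) (ℓ k) = 0 := by simpa [flatOf] using hk
          rw [← eval_pull _ (hP.homogeneous k)] at hk'
          have hks : pull (ℓ k) = 0 := by
            by_contra hne
            exact hx'.2 k (by simpa [s] using hne) hk'
          refine Submodule.mem_span_pair.2 ⟨eval u (ℓ k), eval w (ℓ k), ?_⟩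
          simp only [pull, sub_sub, sub_eq_zero] at hks
          exact hks.symm
      have hfπ : f ∈ pointIdeal (π x) := Ideal.pow_le_self (by omega) (hvan _ hπ0)
      rw [eval_subst, eval_eq_zero_of_mem_pointIdeal hfπ, zero_mul]
    have htoC : toC h ≠ 0 := fun hh =>
      h0 (map_injective _ (algebraMap ℝ ℂ).injective (hh.trans (map_zero _).symm))
    have hzero : bind₁ S f = 0 := (mul_eq_zero.1 hprod).resolve_right htoC
    have hdiff := sub_bind₁_mem (Ideal.span {toC (ℓ i), toC (ℓ j)}) (s := S)
      (fun t => Ideal.mem_span_pair.2 ⟨C (u t : ℂ), C (w t : ℂ), by simp only [S]; ring⟩) f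
    rwa [hzero, sub_zero] at hdiff
  refine ⟨hmem, fun w hi hj => ?_⟩
  obtain ⟨a, b, hab⟩ := Ideal.mem_span_pair.1 hmem
  rw [← hab, map_add, map_mul, map_mul, hi, hj, mul_zero, mul_zero, add_zero]
end

section
/- Let $K$ be a field, let $k \ge 1$ be an integer, let $f \in K[X_0, \dots, X_n]$ be homogeneous of degree $D$, let $\ell$ be a nonzero homogeneous polynomial of degree $1$, and let $\ell_1, \dots, \ell_k$ be homogeneous polynomials of degree $1$ such that for each $i$ the pair $(\ell, \ell_i)$ is linearly independent, and for $i \ne j$ the linear spans of $\{\ell, \ell_i\}$ and $\{\ell, \ell_j\}$ are distinct (so the $\ell_i$ cut out $k$ pairwise distinct hyperplanes inside the hyperplane $L = \{\ell = 0\}$). Suppose $m \ge 1$ and $\mu_1, \dots, \mu_k$ are natural numbers (possibly $0$) such that $f$ lies in the $\mu_i$-th power $(\ell, \ell_i)^{\mu_i}$ of the ideal generated by $\ell$ and $\ell_i$ for every $i$ and, as integers, $\sum_{i=1}^{k} (\mu_i - (m - 1)) > D - (m - 1)$. Then $\ell^m$ divides $f$, i.e. $f$ vanishes to order at least $m$ along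 $L$. -/
open MvPolynomial in
/-- A nonzero linear form can be moved to any prescribed variable by a linear change of
coordinates. -/
lemma exists_algEquiv_linearForm_eq_X {σ K : Type*} [Field K] {ℓ : MvPolynomial σ K}
    (hℓ : ℓ.IsHomogeneous 1) (hℓ0 : ℓ ≠ 0) (i : σ) :
    ∃ T : MvPolynomial σ K ≃ₐ[K] MvPolynomial σ K, T ℓ = X i ∧
      ∀ p d, p.IsHomogeneous d → (T p).IsHomogeneous d := by
  classical
  obtain ⟨s, c, hc, r, hr, hrs, hℓr⟩ : ∃ (s : σ) (c : K), c ≠ 0 ∧ ∃ r : MvPolynomial σ K,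
      r.IsHomogeneous 1 ∧ s ∉ r.vars ∧ ℓ = C c * X s + r := by
    obtain ⟨d, hd⟩ := ne_zero_iff.mp hℓ0
    obtain ⟨s, rfl⟩ : ∃ s, d = Finsupp.single s 1 := by
      by_contra! h
      exact hd (hℓ.coeff_eq_zero fun h1 ↦ (Finsupp.sum_eq_one_iff d).mp h1 |>.elim h)
    refine ⟨s, _, hd, ℓ - C (coeff (Finsupp.single s 1) ℓ) * X s,
      hℓ.sub (isHomogeneous_C_mul_X _ _), ?_, by ring⟩
    rw [mem_vars_iff_mem_support]
    rintro ⟨d, hd', hsd⟩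
    have hhom : d.degree = 1 := by
      by_contra h
      exact mem_support_iff.mp hd' ((hℓ.sub (isHomogeneous_C_mul_X _ _)).coeff_eq_zero h)
    obtain ⟨t, rfl⟩ := (Finsupp.sum_eq_one_iff d).mp hhom
    obtain rfl : s = t := by simpa using hsd
    simp [coeff_C_mul, coeff_X] at hd'
  have hfix : ∀ q : MvPolynomial σ K, aeval (Function.update X s q) r = r := by
    intro q
    conv_rhs => rw [← aeval_X_left_apply r]
    refine eval₂Hom_congr' rfl (fun t ht _ ↦ ?_) rfl
    rw [Function.update_of_ne]
    rintro rfl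
    exact hrs ht
  let A : MvPolynomial σ K ≃ₐ[K] MvPolynomial σ K := AlgEquiv.ofAlgHom
    (aeval (Function.update X s (C c⁻¹ * (X s - r)))) (aeval (Function.update X s ℓ))
    (by
      ext1 t
      obtain rfl | h := eq_or_ne t s
      · simp only [AlgHom.comp_apply, aeval_X, Function.update_self, hℓr, map_add, map_mul,
          hfix, AlgHom.id_apply, algHom_C, algebraMap_eq]
        rw [← mul_assoc, ← C_mul, mul_inv_cancel₀ hc]
        simp
      · simp [h])
    (by
      ext1 t
      obtain rfl | h := eq_or_ne t s
      · simp only [AlgHom.comp_apply, aeval_X, Function.update_self, map_sub, map_mul,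
          hfix, AlgHom.id_apply, algHom_C, algebraMap_eq]
        rw [hℓr, add_sub_cancel_right, ← mul_assoc, ← C_mul, inv_mul_cancel₀ hc]
        simp
      · simp [h])
  refine ⟨A.trans (renameEquiv K (Equiv.swap s i)), ?_, fun p d hp ↦ ?_⟩
  · have : A ℓ = X s := by
      rw [← A.apply_symm_apply (X s)]
      congr 1
      simp [A]
    simp [this]
  · refine IsHomogeneous.rename_isHomogeneous ?_
    have := hp.aeval (n := 1) (Function.update X s (C c⁻¹ * (X s - r))) fun t ↦ by
      obtain rfl | h := eq_or_ne t s
      · rw [Function.update_self]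
        exact ((isHomogeneous_X K t).sub hr).C_mul _
      · rw [Function.update_of_ne h]
        exact isHomogeneous_X K t
    rwa [one_mul] at this

open Polynomial in
/-- The coefficients of a polynomial in `(X, a)^μ` are divisible by powers of `a`. -/
lemma Polynomial.pow_dvd_coeff_of_mem_span_pow {S : Type*} [CommRing S] (a : S) (μ : ℕ)
    {p : S[X]} (hp : p ∈ (Ideal.span {X, C a} : Ideal S[X]) ^ μ) (j : ℕ) :
    a ^ (μ - j) ∣ p.coeff j := by
  induction μ generalizing p j with
  | zero => simp
  | succ μ ih =>
    rw [pow_succ] at hp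
    refine Submodule.mul_induction_on hp (fun q hq r hr ↦ ?_) fun x y hx hy ↦ ?_
    · obtain ⟨u, v, rfl⟩ := Ideal.mem_span_pair.mp hr
      rw [mul_add, ← mul_assoc, ← mul_assoc, coeff_add, coeff_mul_C]
      refine dvd_add ?_ ?_
      · cases j with
        | zero => simp
        | succ j =>
          rw [coeff_mul_X, Nat.add_sub_add_right]
          exact ih (Ideal.mul_mem_right _ _ hq) j
      · refine (pow_dvd_pow a (by lia : μ + 1 - j ≤ μ - j + 1)).trans ?_
        rw [pow_succ]
        exact mul_dvd_mul_right (ih (Ideal.mul_mem_right _ _ hq) j) a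
    · rw [coeff_add]
      exact dvd_add hx hy

namespace MvPolynomial

variable {K : Type*} [Field K]

/-- Split a linear form into its first-variable part and the rest. -/
lemma IsHomogeneous.finSuccEquiv_eq_of_one {n : ℕ} {p : MvPolynomial (Fin (n + 1)) K}
    (hp : p.IsHomogeneous 1) :
    ∃ d : K, finSuccEquiv K n p =
      d • Polynomial.X + Polynomial.C ((finSuccEquiv K n p).coeff 0) := by
  have hdeg : (finSuccEquiv K n p).natDegree ≤ 1 := by
    rw [natDegree_finSuccEquiv]
    exact (degreeOf_le_totalDegree p 0).trans hp.totalDegree_le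
  have h1 := hp.finSuccEquiv_coeff_isHomogeneous 1 0 rfl
  rw [← totalDegree_zero_iff_isHomogeneous, totalDegree_eq_zero_iff_eq_C] at h1
  refine ⟨coeff 0 ((finSuccEquiv K n p).coeff 1),
    (Polynomial.eq_X_add_C_of_natDegree_le_one hdeg).trans ?_⟩
  congr 1
  conv_lhs => rw [h1]
  rw [Algebra.smul_def]
  rfl

/-- Linear forms that divide one another are proportional. -/
lemma IsHomogeneous.exists_smul_eq_of_dvd {σ : Type*} {a b : MvPolynomial σ K}
    (ha : a.IsHomogeneous 1) (hb : b.IsHomogeneous 1) (hb0 : b ≠ 0) (h : a ∣ b) :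
    ∃ c : K, c ≠ 0 ∧ b = c • a := by
  obtain ⟨q, rfl⟩ := h
  obtain ⟨ha0, hq0⟩ := mul_ne_zero_iff.mp hb0
  have hd := totalDegree_mul_of_isDomain ha0 hq0
  rw [hb.totalDegree hb0, ha.totalDegree ha0] at hd
  have hq := totalDegree_eq_zero_iff_eq_C.mp (by lia : q.totalDegree = 0)
  refine ⟨coeff 0 q, fun h ↦ hq0 (by rw [hq, h, C_0]), ?_⟩
  rw [smul_eq_C_mul, ← hq, mul_comm]

lemma IsHomogeneous.irreducible_of_one {σ : Type*} {a : MvPolynomial σ K}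
    (ha : a.IsHomogeneous 1) (ha0 : a ≠ 0) : Irreducible a := by
  refine irreducible_of_totalDegree_eq_one (ha.totalDegree ha0) fun x hx ↦ ?_
  obtain ⟨d, hd⟩ := ne_zero_iff.mp ha0
  exact isUnit_iff_ne_zero.mpr fun h ↦ hd (zero_dvd_iff.mp (h ▸ hx d))

/-- A form divisible by powers of pairwise non-proportional linear forms, of total degree
exceeding its own, vanishes. -/
lemma IsHomogeneous.eq_zero_of_forall_pow_dvd {σ ι : Type*} [Fintype ι] {f : MvPolynomial σ K}
    {d : ℕ} (hf : f.IsHomogeneous d) {a : ι → MvPolynomial σ K}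
    (ha : ∀ i, (a i).IsHomogeneous 1) (ha0 : ∀ i, a i ≠ 0)
    (hdvd : ∀ i j, i ≠ j → ¬ a i ∣ a j) (ν : ι → ℕ) (hν : ∀ i, a i ^ ν i ∣ f)
    (hd : d < ∑ i, ν i) : f = 0 := by
  by_contra hf0
  have hprod : ∏ i, a i ^ ν i ∣ f := by
    refine Fintype.prod_dvd_of_isRelPrime (fun i j hij ↦ ?_) hν
    exact (((ha i).irreducible_of_one (ha0 i)).isRelPrime_iff_not_dvd.mpr (hdvd i j hij)).pow
  have hle := totalDegree_le_of_dvd_of_isDomain hprod hf0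
  have hhom : (∏ i, a i ^ ν i).IsHomogeneous (∑ i, ν i) :=
    IsHomogeneous.prod _ _ _ fun i _ ↦ by simpa using (ha i).pow (ν i)
  rw [hhom.totalDegree (Finset.prod_ne_zero_iff.mpr fun i _ ↦ pow_ne_zero _ (ha0 i)),
    hf.totalDegree hf0] at hle
  lia

end MvPolynomial

lemma Submodule.span_pair_smul_add_smul {K M : Type*} [Field K] [AddCommGroup M] [Module K M]
    (x y : M) (d : K) {c : K} (hc : c ≠ 0) :
    Submodule.span K {x, d • x + c • y} = Submodule.span K {x, y} := by
  apply le_antisymm <;> rw [Submodule.span_le, Set.pair_subset_iff] <;>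
    refine ⟨Submodule.subset_span (by simp), ?_⟩ <;>
    rw [SetLike.mem_coe, Submodule.mem_span_pair]
  · exact ⟨d, c, rfl⟩
  · refine ⟨-(c⁻¹ * d), c⁻¹, ?_⟩
    rw [smul_add, smul_smul, smul_smul, inv_mul_cancel₀ hc]
    module

/-- Let `k ≥ 1`, let `f` be homogeneous of degree `D`, `ℓ` a nonzero linear form, and
`ℓ₁, …, ℓ_k` linear forms such that each pair `(ℓ, ℓᵢ)` is linearly independent and for
`i ≠ j` the spans of `{ℓ, ℓᵢ}` and `{ℓ, ℓⱼ}` are distinct. If `m ≥ 1` and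
`f ∈ (ℓ, ℓᵢ)^{μᵢ}` for all `i` with `∑ᵢ (μᵢ − (m−1)) > D − (m−1)` (as integers), then
`ℓ^m ∣ f`, i.e. `f` vanishes to order at least `m` along the hyperplane `ℓ = 0`. -/
theorem vanishing_order_along_hyperplane {K : Type*} [Field K] {n D k : ℕ} (hk : 1 ≤ k)
    (f : MvPolynomial (Fin (n + 1)) K) (hf : f.IsHomogeneous D)
    (ℓ : MvPolynomial (Fin (n + 1)) K) (hℓ : ℓ.IsHomogeneous 1) (hℓ0 : ℓ ≠ 0)
    (L : Fin k → MvPolynomial (Fin (n + 1)) K)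
    (hLhom : ∀ i, (L i).IsHomogeneous 1)
    (hindep : ∀ i, LinearIndependent K ![ℓ, L i])
    (hdist : ∀ i j, i ≠ j →
      (Submodule.span K {ℓ, L i} : Submodule K (MvPolynomial (Fin (n + 1)) K)) ≠
        Submodule.span K {ℓ, L j})
    (m : ℕ) (hm : 1 ≤ m) (μ : Fin k → ℕ)
    (hmem : ∀ i, f ∈ (Ideal.span {ℓ, L i} : Ideal (MvPolynomial (Fin (n + 1)) K)) ^ μ i)
    (hsum : (D : ℤ) - ((m : ℤ) - 1) < ∑ i, ((μ i : ℤ) - ((m : ℤ) - 1))) :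
    ℓ ^ m ∣ f := by
  obtain ⟨T, hTℓ, hThom⟩ := exists_algEquiv_linearForm_eq_X hℓ hℓ0 0
  let e := T.trans (MvPolynomial.finSuccEquiv K n)
  have heℓ : e ℓ = Polynomial.X := by
    simp [e, hTℓ, MvPolynomial.finSuccEquiv_X_zero]
  let a : Fin k → MvPolynomial (Fin n) K := fun i ↦ (e (L i)).coeff 0
  have ha : ∀ i, (a i).IsHomogeneous 1 := fun i ↦
    (hThom _ _ (hLhom i)).finSuccEquiv_coeff_isHomogeneous 0 1 rfl
  have heL : ∀ i, ∃ d : K, e (L i) = d • Polynomial.X + Polynomial.C (a i) := fun i ↦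
    (hThom _ _ (hLhom i)).finSuccEquiv_eq_of_one
  choose d hd using heL
  have ha0 : ∀ i, a i ≠ 0 := fun i h ↦ by
    have hL : L i = d i • ℓ := e.injective (by rw [hd, h, map_smul, heℓ]; simp)
    have := LinearIndependent.pair_iff.mp (hindep i) (d i) (-1) (by rw [hL]; module)
    simp at this
  have hdvd : ∀ i j, i ≠ j → ¬ a i ∣ a j := fun i j hij h ↦ by
    obtain ⟨c, hc, hcij⟩ := (ha i).exists_smul_eq_of_dvd (ha j) (ha0 j) h
    refine hdist i j hij ?_
    have hL : L j = (d j - c * d i) • ℓ + c • L i := e.injective (by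
      rw [map_add, map_smul, map_smul, hd i, hd j, heℓ, hcij, ← Polynomial.smul_C]
      module)
    rw [hL, Submodule.span_pair_smul_add_smul _ _ _ hc]
  have hemem : ∀ i, e f ∈ (Ideal.span {Polynomial.X, Polynomial.C (a i)} :
      Ideal (Polynomial (MvPolynomial (Fin n) K))) ^ μ i := fun i ↦ by
    have h := Ideal.mem_map_of_mem e (hmem i)
    rw [Ideal.map_pow, Ideal.map_span, Set.image_pair, heℓ] at h
    refine Ideal.pow_right_mono (Ideal.span_le.mpr (Set.pair_subset_iff.mpr ⟨?_, ?_⟩)) _ h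
    · exact Ideal.subset_span (by simp)
    · rw [hd, SetLike.mem_coe, Ideal.mem_span_pair]
      exact ⟨algebraMap K _ (d i), 1, by rw [Algebra.smul_def, one_mul]⟩
  rw [← map_dvd_iff e, map_pow, heℓ, Polynomial.X_pow_dvd_iff]
  intro j hj
  obtain hDj | hjD := lt_or_ge D j
  · refine Polynomial.coeff_eq_zero_of_natDegree_lt (lt_of_le_of_lt ?_ hDj)
    change (MvPolynomial.finSuccEquiv K n (T f)).natDegree ≤ D
    rw [MvPolynomial.natDegree_finSuccEquiv]
    exact (MvPolynomial.degreeOf_le_totalDegree _ 0).trans (hThom _ _ hf).totalDegree_le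
  refine ((hThom _ _ hf).finSuccEquiv_coeff_isHomogeneous j (D - j)
    (by lia)).eq_zero_of_forall_pow_dvd ha ha0 hdvd (fun i ↦ μ i - j)
    (fun i ↦ Polynomial.pow_dvd_coeff_of_mem_span_pow _ _ (hemem i) j) ?_
  -- Lowering `m - 1` to `j` raises the left side of `hsum` no more than the right, as `1 ≤ k`.
  have hle : ∑ i, (((μ i : ℤ) - (m - 1)) + (m - 1 - j)) ≤ ∑ i, ((μ i - j : ℕ) : ℤ) :=
    Finset.sum_le_sum fun i _ ↦ by lia
  rw [Finset.sum_add_distrib, Finset.sum_const, Finset.card_univ, Fintype.card_fin,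
    nsmul_eq_mul] at hle
  have hmul : (m : ℤ) - 1 - j ≤ k * ((m : ℤ) - 1 - j) :=
    le_mul_of_one_le_left (by lia) (by exact_mod_cast hk)
  zify [hjD]
  linarith
end
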